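/- arXiv:math/0002152 — 2 statements merged into one kernel-verified Lean document; each statement's English description precedes it below -/
import Mathlib

section
/- Fix ρ > 1. For f ∈ L¹_loc(μ) the following are equivalent: (a) f ∈ RBMO(μ); (b) there is a constant C_b such that ∫_Q |f − m_Q f| dμ ≤ C_b·μ(ρQ) for every cube Q, and |m_Q f − m_R f| ≤ C_b·K_{Q,R}·(μ(ρQ)/μ(Q) + μ(ρR)/μ(R)) for all cubes Q ⊂ R; (c) there is a constant C_c such that ∫_Q |f − m_Q f| dμ ≤ C_c·μ(Q) for every doubling cube Q, and |m_Q f − m_R f| ≤ C_c·K_{Q,R} for all doubling cubes Q ⊂ R. Moreover the best constants C_b and C_c are comparable to ‖f‖_*, with comparability constants depending only on ρ, d, n, C₀, β_d. -/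
/-!
Common definitions for formalizing Tolsa, "BMO, H¹, and Calderón–Zygmund
operators for non doubling measures".
-/

open MeasureTheory Metric Set Function
open scoped Classical
open scoped ENNReal NNReal BigOperators

noncomputable section

/-- `ℝ^d` with the Euclidean metric. -/
abbrev Euc (d : ℕ) := EuclideanSpace ℝ (Fin d)

variable {d : ℕ}

/-- The support of a measure: points all of whose balls have positive measure. -/
def measSupp (μ : MeasureTheory.Measure (Euc d)) : Set (Euc d) :=
  {x | ∀ r : ℝ, 0 < r → 0 < μ (Metric.ball x r)}

/-- The growth condition `μ(B(x,r)) ≤ C₀ rⁿ`. -/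
def GrowthBound (μ : MeasureTheory.Measure (Euc d)) (n : ℕ) (C₀ : ℝ) : Prop :=
  ∀ (x : Euc d) (r : ℝ), 0 < r → μ (Metric.ball x r) ≤ ENNReal.ofReal (C₀ * r ^ n)

/-- A (closed, axis-parallel) cube with center in the support of `μ` and positive
side length. -/
structure CubeOf (μ : MeasureTheory.Measure (Euc d)) where
  c : Euc d
  ℓ : ℝ
  ℓ_pos : 0 < ℓ
  c_mem : c ∈ measSupp μ

namespace CubeOf

variable {μ : MeasureTheory.Measure (Euc d)}

/-- The set of points of a cube. -/
def set (Q : CubeOf μ) : Set (Euc d) := {y | ∀ i, |y i - Q.c i| ≤ Q.ℓ / 2}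

/-- The concentric dilation `aQ` of a cube, as a set. -/
def dil (Q : CubeOf μ) (a : ℝ) : Set (Euc d) := {y | ∀ i, |y i - Q.c i| ≤ a * Q.ℓ / 2}

/-- The cube `2^k Q`. -/
def pow2 (Q : CubeOf μ) (k : ℕ) : CubeOf μ :=
  ⟨Q.c, 2 ^ k * Q.ℓ, mul_pos (by positivity) Q.ℓ_pos, Q.c_mem⟩

/-- The cube `6^k Q`. -/
def pow6 (Q : CubeOf μ) (k : ℕ) : CubeOf μ :=
  ⟨Q.c, 6 ^ k * Q.ℓ, mul_pos (by positivity) Q.ℓ_pos, Q.c_mem⟩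

end CubeOf

/-- `(α,β)`-doubling cube: `μ(αQ) ≤ β μ(Q)`. -/
def IsDoubling (μ : MeasureTheory.Measure (Euc d)) (α β : ℝ) (Q : CubeOf μ) : Prop :=
  μ (Q.dil α) ≤ ENNReal.ofReal β * μ Q.set

/-- `N_{Q,R}`: the first integer `k ≥ 1` such that `l(2^k Q) ≥ l(R)`. -/
def NQR {μ : MeasureTheory.Measure (Euc d)} (Q R : CubeOf μ) : ℕ :=
  sInf {k : ℕ | 1 ≤ k ∧ R.ℓ ≤ 2 ^ k * Q.ℓ}

/-- The coefficient `K_{Q,R} = 1 + ∑_{k=1}^{N_{Q,R}} μ(2^k Q)/l(2^k Q)^n`. -/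
def Kcoef {μ : MeasureTheory.Measure (Euc d)} (n : ℕ) (Q R : CubeOf μ) : ℝ :=
  1 + ∑ k ∈ Finset.Icc 1 (NQR Q R), (μ ((Q.pow2 k).set)).toReal / ((2 ^ k * Q.ℓ) ^ n)

/-- The smallest `N ≥ 0` such that `2^N Q` is `(2,βd)`-doubling. -/
def tildeIdx (μ : MeasureTheory.Measure (Euc d)) (βd : ℝ) (Q : CubeOf μ) : ℕ :=
  sInf {N : ℕ | IsDoubling μ 2 βd (Q.pow2 N)}

/-- The cube `Q̃`: the smallest cube `2^N Q`, `N ≥ 0`, which is `(2,βd)`-doubling. -/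
def CubeOf.tilde {μ : MeasureTheory.Measure (Euc d)} (Q : CubeOf μ) (βd : ℝ) : CubeOf μ :=
  Q.pow2 (tildeIdx μ βd Q)

/-- The mean `m_Q f` of `f` over the cube `Q` with respect to `μ`. -/
def mQ (μ : MeasureTheory.Measure (Euc d)) (Q : CubeOf μ) (f : Euc d → ℝ) : ℝ :=
  ⨍ x in Q.set, f x ∂μ

/-- For `μ`-a.e. `x` there are `(2,βd)`-doubling cubes centered at `x` of arbitrarily
small side length. -/
def SmallDoublingAE (μ : MeasureTheory.Measure (Euc d)) (βd : ℝ) : Prop :=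
  ∀ᵐ x ∂μ, ∀ ℓ₀ : ℝ, 0 < ℓ₀ → ∃ Q : CubeOf μ, Q.c = x ∧ Q.ℓ < ℓ₀ ∧ IsDoubling μ 2 βd Q

/-- `C` is an admissible constant in the definition of the `RBMO(μ)` norm of `f`. -/
def RBMOBoundWith (μ : MeasureTheory.Measure (Euc d)) (n : ℕ) (βd : ℝ)
    (f : Euc d → ℝ) (C : ℝ≥0∞) : Prop :=
  (∀ Q : CubeOf μ,
    ∫⁻ x in Q.set, ENNReal.ofReal |f x - mQ μ (Q.tilde βd) f| ∂μ ≤ C * μ (Q.dil 2)) ∧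
  (∀ Q R : CubeOf μ, Q.set ⊆ R.set → IsDoubling μ 2 βd Q → IsDoubling μ 2 βd R →
    ENNReal.ofReal |mQ μ Q f - mQ μ R f| ≤ C * ENNReal.ofReal (Kcoef n Q R))

/-- The `RBMO(μ)` norm `‖f‖_*` (with value `∞` if `f ∉ RBMO(μ)`). -/
def rbmoNorm (μ : MeasureTheory.Measure (Euc d)) (n : ℕ) (βd : ℝ) (f : Euc d → ℝ) : ℝ≥0∞ :=
  sInf {C | RBMOBoundWith μ n βd f C}

/-- The conditions defining `‖f‖_{**,(ρ)}`, for a given family of numbers `fQ`. -/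
def StarStarBoundWith (μ : MeasureTheory.Measure (Euc d)) (n : ℕ) (ρ : ℝ)
    (f : Euc d → ℝ) (fQ : CubeOf μ → ℝ) (C : ℝ≥0∞) : Prop :=
  (∀ Q : CubeOf μ, ∫⁻ x in Q.set, ENNReal.ofReal |f x - fQ Q| ∂μ ≤ C * μ (Q.dil ρ)) ∧
  (∀ Q R : CubeOf μ, Q.set ⊆ R.set →
    ENNReal.ofReal |fQ Q - fQ R| ≤ C * ENNReal.ofReal (Kcoef n Q R))

/-- The norm `‖f‖_{**,(ρ)}`. -/
def starStarNorm (μ : MeasureTheory.Measure (Euc d)) (n : ℕ) (ρ : ℝ) (f : Euc d → ℝ) : ℝ≥0∞ :=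
  sInf {C | ∃ fQ : CubeOf μ → ℝ, StarStarBoundWith μ n ρ f fQ C}

end

noncomputable section

variable {d : ℕ}

/-- The conditions defining the `RBMO^p(μ)` norm. -/
def RBMOpBoundWith (μ : MeasureTheory.Measure (Euc d)) (n : ℕ) (βd : ℝ) (p : ℝ)
    (f : Euc d → ℝ) (C : ℝ≥0∞) : Prop :=
  (∀ Q : CubeOf μ,
    ∫⁻ x in Q.set, ENNReal.ofReal |f x - mQ μ (Q.tilde βd) f| ^ p ∂μ ≤ C ^ p * μ (Q.dil 2)) ∧
  (∀ Q R : CubeOf μ, Q.set ⊆ R.set → IsDoubling μ 2 βd Q → IsDoubling μ 2 βd R →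
    ENNReal.ofReal |mQ μ Q f - mQ μ R f| ≤ C * ENNReal.ofReal (Kcoef n Q R))

/-- The `RBMO^p(μ)` norm `‖f‖_{*,p}`. -/
def rbmoPNorm (μ : MeasureTheory.Measure (Euc d)) (n : ℕ) (βd : ℝ) (p : ℝ)
    (f : Euc d → ℝ) : ℝ≥0∞ :=
  sInf {C | RBMOpBoundWith μ n βd p f C}

/-- Condition (b) of Lemma `fifi` of the paper, with constant `Cb`. -/
def CondB (μ : MeasureTheory.Measure (Euc d)) (n : ℕ) (ρ : ℝ)
    (f : Euc d → ℝ) (Cb : ℝ≥0∞) : Prop :=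
  (∀ Q : CubeOf μ, ∫⁻ x in Q.set, ENNReal.ofReal |f x - mQ μ Q f| ∂μ ≤ Cb * μ (Q.dil ρ)) ∧
  (∀ Q R : CubeOf μ, Q.set ⊆ R.set →
    ENNReal.ofReal |mQ μ Q f - mQ μ R f| ≤
      Cb * ENNReal.ofReal (Kcoef n Q R) * (μ (Q.dil ρ) / μ Q.set + μ (R.dil ρ) / μ R.set))

/-- Condition (c) of Lemma `fifi` of the paper, with constant `Cc`. -/
def CondC (μ : MeasureTheory.Measure (Euc d)) (n : ℕ) (βd : ℝ)
    (f : Euc d → ℝ) (Cc : ℝ≥0∞) : Prop :=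
  (∀ Q : CubeOf μ, IsDoubling μ 2 βd Q →
    ∫⁻ x in Q.set, ENNReal.ofReal |f x - mQ μ Q f| ∂μ ≤ Cc * μ Q.set) ∧
  (∀ Q R : CubeOf μ, Q.set ⊆ R.set → IsDoubling μ 2 βd Q → IsDoubling μ 2 βd R →
    ENNReal.ofReal |mQ μ Q f - mQ μ R f| ≤ Cc * ENNReal.ofReal (Kcoef n Q R))

/-- The conditions defining the norm `‖f‖_∘`, relative to a choice `αQ` of minimizers. -/
def CircBoundWith (μ : MeasureTheory.Measure (Euc d)) (n : ℕ) (βd : ℝ)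
    (f : Euc d → ℝ) (αQ : CubeOf μ → ℝ) (C : ℝ≥0∞) : Prop :=
  (∀ Q : CubeOf μ,
    ∫⁻ x in Q.set, ENNReal.ofReal |f x - αQ (Q.tilde βd)| ∂μ ≤ C * μ (Q.dil 2)) ∧
  (∀ Q R : CubeOf μ, Q.set ⊆ R.set → IsDoubling μ 2 βd Q → IsDoubling μ 2 βd R →
    ENNReal.ofReal |αQ Q - αQ R| ≤ C * ENNReal.ofReal (Kcoef n Q R))

/-- The norm `‖f‖_∘`, relative to a choice `αQ` of minimizers. -/
def circNorm (μ : MeasureTheory.Measure (Euc d)) (n : ℕ) (βd : ℝ)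
    (f : Euc d → ℝ) (αQ : CubeOf μ → ℝ) : ℝ≥0∞ :=
  sInf {C | CircBoundWith μ n βd f αQ C}

/-- An atomic block: a function supported on a cube `R`, with zero integral, of the
form `b = ∑ λⱼ aⱼ` with `aⱼ` supported on cubes `Qⱼ ⊆ R` and
`‖aⱼ‖_{L∞(μ)} ≤ (μ(2Qⱼ) K_{Qⱼ,R})⁻¹`. -/
structure AtomicBlock (μ : MeasureTheory.Measure (Euc d)) (n : ℕ) where
  b : Euc d → ℝ
  R : CubeOf μ
  lam : ℕ → ℝ
  a : ℕ → Euc d → ℝ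
  Qj : ℕ → CubeOf μ
  integrable : MeasureTheory.Integrable b μ
  supp_b : ∀ x ∉ R.set, b x = 0
  int_zero : ∫ x, b x ∂μ = 0
  Qj_sub : ∀ j, (Qj j).set ⊆ R.set
  a_supp : ∀ j, ∀ x ∉ (Qj j).set, a j x = 0
  a_meas : ∀ j, MeasureTheory.AEStronglyMeasurable (a j) μ
  a_bound : ∀ j, MeasureTheory.eLpNorm (a j) ⊤ μ ≤
    (μ ((Qj j).dil 2) * ENNReal.ofReal (Kcoef n (Qj j) R))⁻¹
  lam_summable : Summable fun j => |lam j|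
  b_eq : ∀ᵐ x ∂μ, HasSum (fun j => lam j * a j x) (b x)

/-- `|b|_{H^{1,∞}_atb(μ)} = ∑ⱼ |λⱼ|` for the given decomposition. -/
def AtomicBlock.size {μ : MeasureTheory.Measure (Euc d)} {n : ℕ}
    (B : AtomicBlock μ n) : ℝ :=
  ∑' j, |B.lam j|

/-- The `H^{1,∞}_atb(μ)` norm (with value `∞` outside the space). -/
def hatbNorm (μ : MeasureTheory.Measure (Euc d)) (n : ℕ) (f : Euc d → ℝ) : ℝ≥0∞ :=
  sInf {t : ℝ≥0∞ | ∃ B : ℕ → AtomicBlock μ n,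
    (∀ᵐ x ∂μ, HasSum (fun i => (B i).b x) (f x)) ∧
    t = ∑' i, ENNReal.ofReal ((B i).size)}

/-- A `p`-atomic block: like an atomic block, but with the size condition
`‖aⱼ‖_{L^p(μ)} ≤ μ(2Qⱼ)^{1/p-1} K_{Qⱼ,R}⁻¹`. -/
structure PAtomicBlock (μ : MeasureTheory.Measure (Euc d)) (n : ℕ) (p : ℝ) where
  b : Euc d → ℝ
  R : CubeOf μ
  lam : ℕ → ℝ
  a : ℕ → Euc d → ℝ
  Qj : ℕ → CubeOf μ
  integrable : MeasureTheory.Integrable b μ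
  supp_b : ∀ x ∉ R.set, b x = 0
  int_zero : ∫ x, b x ∂μ = 0
  Qj_sub : ∀ j, (Qj j).set ⊆ R.set
  a_supp : ∀ j, ∀ x ∉ (Qj j).set, a j x = 0
  a_meas : ∀ j, MeasureTheory.AEStronglyMeasurable (a j) μ
  a_bound : ∀ j, MeasureTheory.eLpNorm (a j) (ENNReal.ofReal p) μ ≤
    μ ((Qj j).dil 2) ^ (1 / p - 1) * (ENNReal.ofReal (Kcoef n (Qj j) R))⁻¹
  lam_summable : Summable fun j => |lam j|
  b_eq : ∀ᵐ x ∂μ, HasSum (fun j => lam j * a j x) (b x)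

/-- `|b|_{H^{1,p}_atb(μ)} = ∑ⱼ |λⱼ|` for the given decomposition. -/
def PAtomicBlock.size {μ : MeasureTheory.Measure (Euc d)} {n : ℕ} {p : ℝ}
    (B : PAtomicBlock μ n p) : ℝ :=
  ∑' j, |B.lam j|

/-- The `H^{1,p}_atb(μ)` norm (with value `∞` outside the space). -/
def hatbPNorm (μ : MeasureTheory.Measure (Euc d)) (n : ℕ) (p : ℝ) (f : Euc d → ℝ) : ℝ≥0∞ :=
  sInf {t : ℝ≥0∞ | ∃ B : ℕ → PAtomicBlock μ n p,
    (∀ᵐ x ∂μ, HasSum (fun i => (B i).b x) (f x)) ∧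
    t = ∑' i, ENNReal.ofReal ((B i).size)}

/-- A Calderón–Zygmund kernel of dimension `n`, with constant `Ck` and Hölder
exponent `δ`. -/
def CZKernelBound (n : ℕ) (k : Euc d → Euc d → ℝ) (Ck δ : ℝ) : Prop :=
  (∀ x y : Euc d, x ≠ y → |k x y| ≤ Ck / dist x y ^ (n : ℝ)) ∧
  (∀ x x' y : Euc d, x ≠ y → dist x x' ≤ dist x y / 2 →
    |k x y - k x' y| + |k y x - k y x'| ≤ Ck * dist x x' ^ δ / dist x y ^ ((n : ℝ) + δ))

/-- The truncated operator `T_ε f(x) = ∫_{|x-y|>ε} k(x,y) f(y) dμ(y)`. -/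
def trunc (μ : MeasureTheory.Measure (Euc d)) (k : Euc d → Euc d → ℝ) (ε : ℝ)
    (f : Euc d → ℝ) (x : Euc d) : ℝ :=
  ∫ y in {y | ε < dist x y}, k x y * f y ∂μ

/-- The non-centered doubling maximal operator `N`. -/
def Nop (μ : MeasureTheory.Measure (Euc d)) (βd : ℝ) (f : Euc d → ℝ) (x : Euc d) : ℝ≥0∞ :=
  ⨆ (Q : CubeOf μ) (_ : x ∈ Q.set) (_ : IsDoubling μ 2 βd Q),
    (∫⁻ y in Q.set, ENNReal.ofReal |f y| ∂μ) / μ Q.set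

/-- The sharp maximal operator `M^♯`. -/
def Msharp (μ : MeasureTheory.Measure (Euc d)) (n : ℕ) (βd : ℝ)
    (f : Euc d → ℝ) (x : Euc d) : ℝ≥0∞ :=
  (⨆ (Q : CubeOf μ) (_ : x ∈ Q.set),
    (∫⁻ y in Q.set, ENNReal.ofReal |f y - mQ μ (Q.tilde βd) f| ∂μ) / μ (Q.dil (3/2))) +
  ⨆ (Q : CubeOf μ) (R : CubeOf μ) (_ : x ∈ Q.set) (_ : Q.set ⊆ R.set)
      (_ : IsDoubling μ 2 βd Q) (_ : IsDoubling μ 2 βd R),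
    ENNReal.ofReal (|mQ μ Q f - mQ μ R f| / Kcoef n Q R)

/-- The weight functions `w_i = χ_{Q_i} / ∑_k χ_{Q_k}` of the Calderón–Zygmund
decomposition. -/
def czWeight {μ : MeasureTheory.Measure (Euc d)} (J : Finset ℕ) (Q : ℕ → CubeOf μ)
    (i : ℕ) (x : Euc d) : ℝ :=
  Set.indicator (Q i).set
    (fun y => (((J.filter fun kk => y ∈ (Q kk).set).card : ℝ))⁻¹) x

/-- The smallest `(6,6^{n+1})`-doubling cube of the form `6^k Q`, `k ≥ 1`. -/
def smallest6Doubling (μ : MeasureTheory.Measure (Euc d)) (n : ℕ) (Q : CubeOf μ) : CubeOf μ :=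
  Q.pow6 (sInf {k : ℕ | 1 ≤ k ∧ IsDoubling μ 6 (6 ^ (n + 1)) (Q.pow6 k)})

end


noncomputable section RBMOproof

/-- cube with center `x` and side `r`. -/
def cb {d : ℕ} (x : Euc d) (r : ℝ) : Set (Euc d) := {y | ∀ i, |y i - x i| ≤ r / 2}

theorem cb_subset {d : ℕ} {x y : Euc d} {r s : ℝ} (h : ∀ i, |x i - y i| ≤ (s - r) / 2) :
    cb x r ⊆ cb y s := by
  intro z hz i
  have h1 := hz i
  have h2 := h i
  have h3 := abs_sub_le (z i) (x i) (y i)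
  linarith

theorem cb_mono {d : ℕ} (x : Euc d) {r s : ℝ} (h : r ≤ s) : cb x r ⊆ cb x s :=
  cb_subset (by intro i; simp; linarith)

theorem cb_self {d : ℕ} (x : Euc d) {r : ℝ} (h : 0 ≤ r) : x ∈ cb x r := by
  intro i; simp; linarith

theorem cb_closed {d : ℕ} (x : Euc d) (r : ℝ) : IsClosed (cb x r) := by
  have : cb x r = ⋂ i, {y : Euc d | |y i - x i| ≤ r / 2} := by
    ext y; simp [cb]
  rw [this]
  refine isClosed_iInter fun i => isClosed_le ?_ continuous_const
  fun_prop

theorem cb_sub_ball {d : ℕ} (hd : 1 ≤ d) (x : Euc d) {r : ℝ} (hr : 0 < r) :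
    cb x r ⊆ ball x (d * r) := by
  intro y hy
  have hd' : (1 : ℝ) ≤ d := by exact_mod_cast hd
  rw [mem_ball, EuclideanSpace.dist_eq, Real.sqrt_lt' (by positivity)]
  calc ∑ i, dist (y i) (x i) ^ 2 ≤ ∑ i : Fin d, (r / 2) ^ 2 := by
        refine Finset.sum_le_sum fun i _ => ?_
        rw [Real.dist_eq]
        exact pow_le_pow_left₀ (abs_nonneg _) (hy i) 2
    _ = d * (r / 2) ^ 2 := by simp
    _ < (d * r) ^ 2 := by
        have : 0 < r ^ 2 := by positivity
        nlinarith [mul_pos (show (0 : ℝ) < d by linarith) this,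
          mul_le_mul_of_nonneg_right hd' (mul_pos (show (0 : ℝ) < d by linarith) this).le]

theorem cb_compact {d : ℕ} (x : Euc d) (r : ℝ) : IsCompact (cb x r) := by
  rcases Nat.eq_zero_or_pos d with h | hd
  · subst h
    exact Set.Subsingleton.isCompact (fun a _ b _ => Subsingleton.elim a b)
  · refine Metric.isCompact_of_isClosed_isBounded (cb_closed x r) ?_
    have h1 : (0 : ℝ) < |r| + 1 := by positivity
    refine (Metric.isBounded_ball (x := x) (r := d * (|r| + 1))).subset ?_
    refine (cb_mono x ?_).trans (cb_sub_ball hd x h1)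
    linarith [le_abs_self r]

theorem ball_sub_cb {d : ℕ} (x : Euc d) (r : ℝ) : ball x (r / 2) ⊆ cb x r := by
  intro y hy i
  have h1 : ‖(y - x) i‖ ≤ ‖y - x‖ := PiLp.norm_apply_le (y - x) i
  rw [mem_ball, dist_eq_norm] at hy
  rw [Real.norm_eq_abs] at h1
  have : (y - x) i = y i - x i := rfl
  rw [this] at h1
  linarith

variable {d : ℕ} {μ : Measure (Euc d)}

theorem cb_pos {x : Euc d} (hx : x ∈ measSupp μ) {r : ℝ} (hr : 0 < r) : 0 < μ (cb x r) :=
  (hx (r / 2) (by positivity)).trans_le (measure_mono (ball_sub_cb x r))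

/-- the growth constant for cubes -/
def gA (d n : ℕ) (C₀ : ℝ) : ℝ := C₀ * (d : ℝ) ^ n

theorem cb_growth {n : ℕ} {C₀ : ℝ} (hd : 1 ≤ d) (hg : GrowthBound μ n C₀) (x : Euc d) {r : ℝ}
    (hr : 0 < r) : μ (cb x r) ≤ ENNReal.ofReal (gA d n C₀ * r ^ n) := by
  have hd' : (1 : ℝ) ≤ d := by exact_mod_cast hd
  have := (measure_mono (cb_sub_ball hd x hr)).trans (hg x (d * r) (by positivity))
  rwa [mul_pow, ← mul_assoc] at this

theorem cb_lt_top {n : ℕ} {C₀ : ℝ} (hd : 1 ≤ d) (hg : GrowthBound μ n C₀) (x : Euc d) (r : ℝ) :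
    μ (cb x r) < ⊤ := by
  have h1 : (0 : ℝ) < |r| + 1 := by positivity
  refine (measure_mono (cb_mono x ?_)).trans_lt
    ((cb_growth hd hg x h1).trans_lt ENNReal.ofReal_lt_top)
  linarith [le_abs_self r]

/-- density of a cube -/
def th (μ : Measure (Euc d)) (n : ℕ) (x : Euc d) (r : ℝ) : ℝ := (μ (cb x r)).toReal / r ^ n

theorem th_nonneg (n : ℕ) (x : Euc d) {r : ℝ} (hr : 0 < r) : 0 ≤ th μ n x r := by
  unfold th; positivity

theorem th_pos {n : ℕ} {C₀ : ℝ} (hd : 1 ≤ d) (hg : GrowthBound μ n C₀)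
    {x : Euc d} (hx : x ∈ measSupp μ) {r : ℝ} (hr : 0 < r) : 0 < th μ n x r :=
  div_pos (ENNReal.toReal_pos (cb_pos hx hr).ne' (cb_lt_top hd hg x r).ne) (by positivity)

theorem th_le {n : ℕ} {C₀ : ℝ} (hC : 0 < C₀) (hd : 1 ≤ d) (hg : GrowthBound μ n C₀)
    (x : Euc d) {r : ℝ} (hr : 0 < r) : th μ n x r ≤ gA d n C₀ := by
  unfold th
  rw [div_le_iff₀ (by positivity)]
  have hA : 0 ≤ gA d n C₀ * r ^ n := by unfold gA; positivity
  have := ENNReal.toReal_mono ENNReal.ofReal_ne_top (cb_growth hd hg x hr)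
  rwa [ENNReal.toReal_ofReal hA] at this

/-- comparison of densities -/
theorem th_comp {n : ℕ} {C₀ : ℝ} (hd : 1 ≤ d) (hg : GrowthBound μ n C₀)
    {x y : Euc d} {r s : ℝ} (hr : 0 < r) (hsr : s ≤ 2 * r) (hs : 0 < s)
    (hsub : cb x r ⊆ cb y s) : th μ n x r ≤ 2 ^ n * th μ n y s := by
  unfold th
  have h1 : (μ (cb x r)).toReal ≤ (μ (cb y s)).toReal :=
    ENNReal.toReal_mono (cb_lt_top hd hg y s).ne (measure_mono hsub)
  rw [← mul_div_assoc, div_le_div_iff₀ (by positivity) (by positivity)]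
  calc (μ (cb x r)).toReal * s ^ n ≤ (μ (cb y s)).toReal * (2 * r) ^ n := by gcongr
    _ = _ := by rw [mul_pow]; ring

/-- dyadic exponent -/
def pz (r : ℝ) : ℤ := Int.clog 2 r

theorem le_pz (r : ℝ) : r ≤ (2 : ℝ) ^ pz r := by
  have := Int.self_le_zpow_clog (R := ℝ) (b := 2) (by norm_num) r
  simpa [pz] using this

theorem pz_lt {r : ℝ} (hr : 0 < r) : (2 : ℝ) ^ (pz r - 1) < r := by
  have := Int.zpow_pred_clog_lt_self (R := ℝ) (b := 2) (by norm_num) hr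
  simpa [pz] using this

theorem pz_lt' {r : ℝ} (hr : 0 < r) : (2 : ℝ) ^ (pz r) < 2 * r := by
  have := pz_lt hr
  rw [zpow_sub_one₀ (by norm_num)] at this
  linarith

theorem pz_mono {r s : ℝ} (hr : 0 < r) (h : r ≤ s) : pz r ≤ pz s := Int.clog_mono_right hr h

theorem pz_le {r : ℝ} (hr : 0 < r) {p : ℤ} (h : r ≤ (2 : ℝ) ^ p) : pz r ≤ p :=
  (Int.le_zpow_iff_clog_le (R := ℝ) (b := 2) (by norm_num) hr).1 (by simpa using h)

theorem le_of_lt_pz {r : ℝ} (hr : 0 < r) {p : ℤ} (h : (2 : ℝ) ^ p < r) : p < pz r :=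
  (Int.zpow_lt_iff_lt_clog (R := ℝ) (b := 2) (by norm_num) hr).1 (by simpa using h)

theorem pz_two_pow {r : ℝ} (hr : 0 < r) (N : ℕ) : pz (2 ^ N * r) = N + pz r := by
  have h2 : (0 : ℝ) < 2 ^ N := by positivity
  apply le_antisymm
  · apply pz_le (by positivity)
    rw [zpow_add₀ (by norm_num), zpow_natCast]
    exact mul_le_mul_of_nonneg_left (le_pz r) h2.le
  · have : (N : ℤ) + pz r - 1 < pz (2 ^ N * r) := by
      apply le_of_lt_pz (by positivity)
      rw [add_sub_assoc, zpow_add₀ (by norm_num), zpow_natCast]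
      exact mul_lt_mul_of_pos_left (pz_lt hr) h2
    omega

/-- dyadic sums of densities -/
def Sg (μ : Measure (Euc d)) (n : ℕ) (x : Euc d) (a b : ℤ) : ℝ :=
  ∑ j ∈ Finset.Icc a b, th μ n x ((2 : ℝ) ^ j)

theorem Sg_nonneg (n : ℕ) (x : Euc d) (a b : ℤ) : 0 ≤ Sg μ n x a b :=
  Finset.sum_nonneg fun _ _ => th_nonneg n x (by positivity)

theorem Sg_mono (n : ℕ) (x : Euc d) {a b a' b' : ℤ} (h1 : a' ≤ a) (h2 : b ≤ b') :
    Sg μ n x a b ≤ Sg μ n x a' b' :=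
  Finset.sum_le_sum_of_subset_of_nonneg (Finset.Icc_subset_Icc h1 h2)
    fun _ _ _ => th_nonneg n x (by positivity)

theorem Sg_concat (n : ℕ) (x : Euc d) (a b c : ℤ) :
    Sg μ n x a c ≤ Sg μ n x a b + Sg μ n x b c := by
  unfold Sg
  have hsub : Finset.Icc a c ⊆ Finset.Icc a b ∪ Finset.Icc b c := by
    intro j hj
    simp only [Finset.mem_union, Finset.mem_Icc] at hj ⊢
    omega
  calc _ ≤ ∑ j ∈ Finset.Icc a b ∪ Finset.Icc b c, th μ n x ((2 : ℝ) ^ j) :=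
        Finset.sum_le_sum_of_subset_of_nonneg hsub fun _ _ _ => th_nonneg n x (by positivity)
    _ ≤ _ := by
        rw [← Finset.sum_union_inter]
        exact le_add_of_nonneg_right (Finset.sum_nonneg fun _ _ => th_nonneg n x (by positivity))

theorem Sg_short {n : ℕ} {C₀ : ℝ} (hC : 0 < C₀) (hd : 1 ≤ d) (hg : GrowthBound μ n C₀)
    (x : Euc d) {a b : ℤ} (h : ℕ) (hab : b < a + h) : Sg μ n x a b ≤ h * gA d n C₀ := by
  unfold Sg
  have hA : 0 ≤ gA d n C₀ := by unfold gA; positivity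
  calc _ ≤ ∑ j ∈ Finset.Icc a b, gA d n C₀ :=
        Finset.sum_le_sum fun _ _ => th_le hC hd hg x (by positivity)
    _ = (Finset.Icc a b).card * gA d n C₀ := by simp
    _ ≤ _ := by
        gcongr
        simp
        omega

theorem Sg_center {n : ℕ} {C₀ : ℝ} (hC : 0 < C₀) (hd : 1 ≤ d) (hg : GrowthBound μ n C₀)
    {x y : Euc d} {a b : ℤ} (hxy : ∀ i, |x i - y i| ≤ (2 : ℝ) ^ a / 2) :
    Sg μ n x a b ≤ 2 ^ n * (Sg μ n y a b + gA d n C₀) := by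
  have h1 : Sg μ n x a b ≤ 2 ^ n * Sg μ n y (a + 1) (b + 1) := by
    unfold Sg
    rw [Finset.mul_sum]
    have : Finset.Icc (a + 1) (b + 1) = (Finset.Icc a b).map (addRightEmbedding 1) := by
      simp
    rw [this, Finset.sum_map]
    refine Finset.sum_le_sum fun j hj => ?_
    rw [Finset.mem_Icc] at hj
    simp only [addRightEmbedding_apply]
    have hj2 : (2 : ℝ) ^ (j + 1) = 2 * 2 ^ j := by rw [zpow_add_one₀ (by norm_num)]; ring
    have hja : (2 : ℝ) ^ a ≤ 2 ^ j := zpow_le_zpow_right₀ (by norm_num) hj.1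
    refine th_comp hd hg (by positivity) hj2.le (by positivity) (cb_subset fun i => ?_)
    rw [hj2]
    linarith [hxy i]
  refine h1.trans ?_
  gcongr
  have h2 := Sg_mono (μ := μ) n y (a := a + 1) (b := b + 1) (a' := a) (b' := b + 1)
    (by omega) le_rfl
  have h3 := Sg_concat (μ := μ) n y a b (b + 1)
  rcases lt_or_ge b a with hlt | hle
  · have h4 : Sg μ n y (a + 1) (b + 1) = 0 := by
      unfold Sg
      rw [Finset.Icc_eq_empty (by omega)]
      simp
    rw [h4]
    have := Sg_nonneg (μ := μ) n y a b
    have hA : 0 ≤ gA d n C₀ := by unfold gA; positivity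
    positivity
  · have : Sg μ n y a (b + 1) ≤ Sg μ n y a b + Sg μ n y (b + 1) (b + 1) := by
      unfold Sg
      rw [← Finset.sum_union]
      · refine le_of_eq (Finset.sum_congr ?_ fun _ _ => rfl)
        ext j; simp only [Finset.mem_union, Finset.mem_Icc]; omega
      · rw [Finset.disjoint_left]
        intro j
        simp only [Finset.mem_Icc]; omega
    have h5 := Sg_short hC hd hg y (a := b + 1) (b := b + 1) 1 (by simp)
    simp only [Nat.cast_one, one_mul] at h5
    linarith

end RBMOproof

noncomputable section RBMOproof2

variable {d : ℕ} {μ : Measure (Euc d)}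

theorem sub_center {Q R : CubeOf μ} (h : Q.set ⊆ R.set) (i : Fin d) :
    |Q.c i - R.c i| ≤ R.ℓ / 2 :=
  h (show Q.c ∈ cb Q.c Q.ℓ from cb_self _ Q.ℓ_pos.le) i

theorem sub_len (hd : 1 ≤ d) {Q R : CubeOf μ} (h : Q.set ⊆ R.set) : Q.ℓ ≤ R.ℓ := by
  have hp := Q.ℓ_pos
  have h1 : (WithLp.toLp 2 (fun j => Q.c j + Q.ℓ / 2) : Euc d) ∈ R.set := by
    apply h
    intro i
    simp [abs_of_pos (half_pos hp)]
  have h2 : (WithLp.toLp 2 (fun j => Q.c j - Q.ℓ / 2) : Euc d) ∈ R.set := by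
    apply h
    intro i
    simp [abs_of_pos (half_pos hp)]
  have h3 := h1 ⟨0, hd⟩
  have h4 := h2 ⟨0, hd⟩
  simp only at h3 h4
  rw [abs_le] at h3 h4
  linarith [h3.2, h4.1]

theorem NQR_mem (Q R : CubeOf μ) : 1 ≤ NQR Q R ∧ R.ℓ ≤ 2 ^ (NQR Q R) * Q.ℓ := by
  have hne : {k : ℕ | 1 ≤ k ∧ R.ℓ ≤ 2 ^ k * Q.ℓ}.Nonempty := by
    obtain ⟨k, hk⟩ := pow_unbounded_of_one_lt (R.ℓ / Q.ℓ) (one_lt_two (α := ℝ))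
    refine ⟨k + 1, by omega, ?_⟩
    rw [div_lt_iff₀ Q.ℓ_pos] at hk
    rw [pow_succ]
    have := mul_pos (pow_pos (zero_lt_two (α := ℝ)) k) Q.ℓ_pos
    linarith
  exact Nat.sInf_mem hne

theorem NQR_pred {Q R : CubeOf μ} (h : Q.ℓ ≤ R.ℓ) : 2 ^ (NQR Q R - 1) * Q.ℓ ≤ R.ℓ := by
  by_contra hcon
  push Not at hcon
  have h1 := (NQR_mem Q R).1
  by_cases h2 : 1 ≤ NQR Q R - 1
  · have : NQR Q R ≤ NQR Q R - 1 := Nat.sInf_le ⟨h2, hcon.le⟩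
    omega
  · have : NQR Q R - 1 = 0 := by omega
    rw [this] at hcon
    simp at hcon
    linarith

theorem Kcoef_eq (n : ℕ) (Q R : CubeOf μ) :
    Kcoef n Q R = 1 + ∑ k ∈ Finset.range (NQR Q R), th μ n Q.c (2 ^ (k + 1) * Q.ℓ) := by
  have : ∀ N : ℕ, ∀ f : ℕ → ℝ, ∑ k ∈ Finset.Icc 1 N, f k = ∑ k ∈ Finset.range N, f (k + 1) := by
    intro N f
    induction N with
    | zero => simp
    | succ N ih => rw [Finset.sum_Icc_succ_top (by omega), ih, Finset.sum_range_succ]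
  unfold Kcoef
  rw [this]
  rfl

theorem Kcoef_ge_one (n : ℕ) (Q R : CubeOf μ) : 1 ≤ Kcoef n Q R := by
  rw [Kcoef_eq]
  have : 0 ≤ ∑ k ∈ Finset.range (NQR Q R), th μ n Q.c (2 ^ (k + 1) * Q.ℓ) :=
    Finset.sum_nonneg fun k _ => th_nonneg n _ (mul_pos (by positivity) Q.ℓ_pos)
  linarith

theorem Sg_range (n : ℕ) (x : Euc d) (p : ℤ) (N : ℕ) :
    Sg μ n x p (p + N - 1) = ∑ k ∈ Finset.range N, th μ n x ((2 : ℝ) ^ (p + k)) := by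
  induction N with
  | zero => simp [Sg]
  | succ N ih =>
    rw [Finset.sum_range_succ, ← ih]
    unfold Sg
    have : Finset.Icc p (p + ((N + 1 : ℕ) : ℤ) - 1) = insert (p + (N : ℤ)) (Finset.Icc p (p + N - 1)) := by
      ext j; simp only [Finset.mem_insert, Finset.mem_Icc]; push_cast; omega
    rw [this, Finset.sum_insert (by simp), add_comm]

theorem K_upper {n : ℕ} {C₀ : ℝ} (hd : 1 ≤ d) (hg : GrowthBound μ n C₀) {Q R : CubeOf μ}
    (h : Q.ℓ ≤ R.ℓ) :
    Kcoef n Q R ≤ 1 + 2 ^ n * Sg μ n Q.c (pz Q.ℓ + 1) (pz R.ℓ + 1) := by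
  rw [Kcoef_eq]
  have hN := (NQR_mem Q R).1
  have hpred := NQR_pred h
  have hQ := Q.ℓ_pos
  have hle : pz Q.ℓ + NQR Q R ≤ pz R.ℓ + 1 := by
    have h1 := pz_mono (mul_pos (by positivity) hQ) hpred
    rw [pz_two_pow hQ] at h1
    omega
  have h2 : Sg μ n Q.c (pz Q.ℓ + 1) (pz Q.ℓ + 1 + NQR Q R - 1) ≤
      Sg μ n Q.c (pz Q.ℓ + 1) (pz R.ℓ + 1) := Sg_mono n _ le_rfl (by omega)
  rw [Sg_range] at h2
  have h3 : ∑ k ∈ Finset.range (NQR Q R), th μ n Q.c (2 ^ (k + 1) * Q.ℓ) ≤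
      2 ^ n * ∑ k ∈ Finset.range (NQR Q R), th μ n Q.c ((2 : ℝ) ^ (pz Q.ℓ + 1 + k)) := by
    rw [Finset.mul_sum]
    refine Finset.sum_le_sum fun k _ => ?_
    have e : (2 : ℝ) ^ (pz Q.ℓ + 1 + k) = 2 ^ (k + 1) * 2 ^ pz Q.ℓ := by
      rw [add_assoc, zpow_add₀ (by norm_num), mul_comm, ← zpow_natCast]
      congr 2
      push_cast; ring
    rw [e]
    have hk : (0 : ℝ) < 2 ^ (k + 1) := by positivity
    refine th_comp hd hg (by positivity) ?_ (by positivity) (cb_mono _ ?_)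
    · nlinarith [pz_lt' hQ]
    · exact mul_le_mul_of_nonneg_left (le_pz _) hk.le
  have h4 : (0 : ℝ) < 2 ^ n := by positivity
  nlinarith

theorem K_lower {n : ℕ} {C₀ : ℝ} (hd : 1 ≤ d) (hg : GrowthBound μ n C₀) (Q R : CubeOf μ) :
    Sg μ n Q.c (pz Q.ℓ) (pz R.ℓ - 1) ≤ 2 ^ n * Kcoef n Q R := by
  rw [Kcoef_eq]
  have hN := (NQR_mem Q R).2
  have hQ := Q.ℓ_pos
  have hle : pz R.ℓ ≤ pz Q.ℓ + NQR Q R := by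
    have h1 := pz_mono R.ℓ_pos hN
    rw [pz_two_pow hQ] at h1
    omega
  have h2 : Sg μ n Q.c (pz Q.ℓ) (pz R.ℓ - 1) ≤ Sg μ n Q.c (pz Q.ℓ) (pz Q.ℓ + NQR Q R - 1) :=
    Sg_mono n _ le_rfl (by omega)
  rw [Sg_range] at h2
  refine h2.trans ?_
  have h3 : ∑ k ∈ Finset.range (NQR Q R), th μ n Q.c ((2 : ℝ) ^ (pz Q.ℓ + k)) ≤
      2 ^ n * ∑ k ∈ Finset.range (NQR Q R), th μ n Q.c (2 ^ (k + 1) * Q.ℓ)  := by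
    rw [Finset.mul_sum]
    refine Finset.sum_le_sum fun k _ => ?_
    have e : (2 : ℝ) ^ (pz Q.ℓ + k) = 2 ^ k * 2 ^ pz Q.ℓ := by
      rw [zpow_add₀ (by norm_num), mul_comm, ← zpow_natCast]
    rw [e, pow_succ]
    have hk : (0 : ℝ) < 2 ^ k := by positivity
    refine th_comp hd hg (by positivity) ?_ (by positivity) (cb_mono _ ?_)
    · nlinarith [le_pz Q.ℓ]
    · nlinarith [pz_lt' hQ]
  have h4 : (0 : ℝ) < 2 ^ n := by positivity
  nlinarith

/-- standing assumptions -/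
structure Ctx (n m : ℕ) (C₀ α β : ℝ) (μ : Measure (Euc d)) : Prop where
  hC : 0 < C₀
  hd : 1 ≤ d
  hg : GrowthBound μ n C₀
  hα : α = 2 ^ m
  hβ : (2 : ℝ) ^ (m * n) < β

/-- bound for nondoubling chains -/
def bB (d n m : ℕ) (C₀ β : ℝ) : ℝ :=
  ((2 : ℝ) ^ (m * n) / β) / (1 - (2 : ℝ) ^ (m * n) / β) * (m * gA d n C₀)

variable {n m : ℕ} {C₀ α β : ℝ}

theorem Ctx.q_pos (H : Ctx n m C₀ α β μ) : 0 < (2 : ℝ) ^ (m * n) / β := by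
  have : (0 : ℝ) < 2 ^ (m * n) := by positivity
  exact div_pos this (this.trans H.hβ)

theorem Ctx.q_lt (H : Ctx n m C₀ α β μ) : (2 : ℝ) ^ (m * n) / β < 1 := by
  have : (0 : ℝ) < 2 ^ (m * n) := by positivity
  rw [div_lt_one (this.trans H.hβ)]
  exact H.hβ

theorem Ctx.A_nonneg (H : Ctx n m C₀ α β μ) : 0 ≤ gA d n C₀ := by
  have := H.hC; unfold gA; positivity

theorem Ctx.nd (H : Ctx n m C₀ α β μ) (x : Euc d) {r : ℝ} (hr : 0 < r)
    (h : ¬ (μ (cb x (α * r)) ≤ ENNReal.ofReal β * μ (cb x r))) :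
    th μ n x r ≤ (2 : ℝ) ^ (m * n) / β * th μ n x (2 ^ m * r) := by
  push Not at h
  have hβ0 : 0 < β := lt_trans (by positivity) H.hβ
  have h1 := ENNReal.toReal_mono (cb_lt_top H.hd H.hg _ _).ne h.le
  rw [ENNReal.toReal_mul, ENNReal.toReal_ofReal hβ0.le, H.hα] at h1
  unfold th
  rw [div_mul_div_comm, div_le_div_iff₀ (by positivity) (by positivity), mul_pow, ← pow_mul]
  have h2 : 0 ≤ (2 : ℝ) ^ (m * n) * r ^ n := by positivity
  nlinarith

theorem Ctx.chain (H : Ctx n m C₀ α β μ) (x : Euc d) {r : ℝ} (hr : 0 < r) (N : ℕ)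
    (h : ∀ k < N, ¬ (μ (cb x (α * (2 ^ k * r))) ≤ ENNReal.ofReal β * μ (cb x (2 ^ k * r)))) :
    ∑ k ∈ Finset.range N, th μ n x (2 ^ k * r) ≤ bB d n m C₀ β := by
  set q := (2 : ℝ) ^ (m * n) / β with hq
  have hq0 := H.q_pos
  have hq1 := H.q_lt
  rw [← hq] at hq0 hq1
  set u : ℕ → ℝ := fun k => th μ n x (2 ^ k * r) with hu
  have hu0 : ∀ k, 0 ≤ u k := fun k => th_nonneg n x (by positivity)
  have huA : ∀ k, u k ≤ gA d n C₀ := fun k => th_le H.hC H.hd H.hg x (by positivity)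
  have h1 : ∑ k ∈ Finset.range N, u k ≤ q * ∑ k ∈ Finset.range N, u (m + k) := by
    rw [Finset.mul_sum]
    refine Finset.sum_le_sum fun k hk => ?_
    have := H.nd x (by positivity) (h k (Finset.mem_range.1 hk))
    rw [← mul_assoc, ← pow_add] at this
    exact this
  have h2 : ∑ k ∈ Finset.range N, u (m + k) ≤ ∑ k ∈ Finset.range N, u k + m * gA d n C₀ := by
    have e1 := Finset.sum_range_add u m N
    have e2 := Finset.sum_range_add u N m
    rw [add_comm N m] at e2
    have e3 : ∑ k ∈ Finset.range m, u (N + k) ≤ ∑ k ∈ Finset.range m, gA d n C₀ :=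
      Finset.sum_le_sum fun k _ => huA _
    have e4 : 0 ≤ ∑ k ∈ Finset.range m, u k := Finset.sum_nonneg fun k _ => hu0 _
    simp at e3
    linarith
  unfold bB
  rw [← hq, div_mul_eq_mul_div, le_div_iff₀ (by linarith)]
  nlinarith

def bD (d n m : ℕ) (C₀ β : ℝ) : ℝ := 2 ^ n * bB d n m C₀ β + 6 * gA d n C₀

theorem Ctx.bB_nonneg (H : Ctx n m C₀ α β μ) : 0 ≤ bB d n m C₀ β := by
  have h1 := H.q_pos
  have h2 := H.q_lt
  have h3 := H.A_nonneg
  unfold bB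
  have : 0 < 1 - (2 : ℝ) ^ (m * n) / β := by linarith
  positivity

theorem Ctx.bD_nonneg (H : Ctx n m C₀ α β μ) : 0 ≤ bD d n m C₀ β := by
  have h1 := H.bB_nonneg
  have h3 := H.A_nonneg
  unfold bD
  positivity

theorem Ctx.chainS (H : Ctx n m C₀ α β μ) (x : Euc d) {r : ℝ} (hr : 0 < r) (N : ℕ)
    (h : ∀ k < N, ¬ (μ (cb x (α * (2 ^ k * r))) ≤ ENNReal.ofReal β * μ (cb x (2 ^ k * r)))) :
    Sg μ n x (pz r) (pz r + N + 3) ≤ bD d n m C₀ β := by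
  have h0 := H.chain x hr N h
  have h1 : Sg μ n x (pz r) (pz r + N - 2) ≤ Sg μ n x (pz r - 1) (pz r - 1 + N - 1) :=
    Sg_mono n x (by omega) (by omega)
  rw [Sg_range] at h1
  have h3 : ∑ k ∈ Finset.range N, th μ n x ((2 : ℝ) ^ (pz r - 1 + k)) ≤
      2 ^ n * ∑ k ∈ Finset.range N, th μ n x (2 ^ k * r)  := by
    rw [Finset.mul_sum]
    refine Finset.sum_le_sum fun k _ => ?_
    have e : (2 : ℝ) ^ (pz r - 1 + k) = 2 ^ k * 2 ^ (pz r - 1) := by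
      rw [zpow_add₀ (by norm_num), mul_comm, ← zpow_natCast]
    rw [e]
    have hk : (0 : ℝ) < 2 ^ k := by positivity
    have e2 : (2 : ℝ) ^ (pz r) = 2 * 2 ^ (pz r - 1) := by
      rw [zpow_sub_one₀ (by norm_num)]; ring
    refine th_comp H.hd H.hg (by positivity) ?_ (by positivity) (cb_mono _ ?_)
    · have := le_pz r
      rw [e2] at this
      nlinarith
    · nlinarith [pz_lt hr]
  have h4 : (0 : ℝ) < 2 ^ n := by positivity
  have h5 := Sg_concat (μ := μ) n x (pz r) (pz r + N - 2) (pz r + N + 3)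
  have h6 := Sg_short H.hC H.hd H.hg x (a := pz r + N - 2) (b := pz r + N + 3) 6 (by norm_num; omega)
  unfold bD
  push_cast at h6
  nlinarith

/-- generic `tilde` -/
def tIdx (α β : ℝ) (Q : CubeOf μ) : ℕ := sInf {N : ℕ | IsDoubling μ α β (Q.pow2 N)}

def tl (α β : ℝ) (Q : CubeOf μ) : CubeOf μ := Q.pow2 (tIdx α β Q)

theorem Ctx.tl_ne (H : Ctx n m C₀ α β μ) (Q : CubeOf μ) :
    {N : ℕ | IsDoubling μ α β (Q.pow2 N)}.Nonempty := by
  by_contra hcon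
  rw [Set.not_nonempty_iff_eq_empty] at hcon
  have hall : ∀ k : ℕ, ¬ (μ (cb Q.c (α * (2 ^ k * Q.ℓ))) ≤
      ENNReal.ofReal β * μ (cb Q.c (2 ^ k * Q.ℓ))) := by
    intro k hk
    have : k ∈ {N : ℕ | IsDoubling μ α β (Q.pow2 N)} := hk
    rw [hcon] at this
    exact this
  have hQ := Q.ℓ_pos
  set q := (2 : ℝ) ^ (m * n) / β with hq
  have hq0 := H.q_pos
  have hq1 := H.q_lt
  rw [← hq] at hq0 hq1
  have key : ∀ j : ℕ, th μ n Q.c Q.ℓ ≤ q ^ j * th μ n Q.c (2 ^ (m * j) * Q.ℓ) := by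
    intro j
    induction j with
    | zero => simp
    | succ j ih =>
      have h1 := H.nd Q.c (mul_pos (by positivity) hQ) (hall (m * j))
      rw [← mul_assoc, ← pow_add, ← hq, add_comm m] at h1
      rw [Nat.mul_succ, pow_succ, mul_assoc]
      exact ih.trans (mul_le_mul_of_nonneg_left h1 (by positivity))
  have hpos := th_pos H.hd H.hg Q.c_mem hQ
  have hA := H.A_nonneg
  obtain ⟨j, hj⟩ := exists_pow_lt_of_lt_one (show 0 < th μ n Q.c Q.ℓ / (gA d n C₀ + 1) by positivity) hq1
  rw [lt_div_iff₀ (by positivity)] at hj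
  have h2 := key j
  have h3 := th_le H.hC H.hd H.hg Q.c (mul_pos (show (0:ℝ) < 2 ^ (m * j) by positivity) hQ)
  have h4 : 0 < q ^ j := by positivity
  nlinarith

theorem Ctx.tl_doubling (H : Ctx n m C₀ α β μ) (Q : CubeOf μ) : IsDoubling μ α β (tl α β Q) :=
  Nat.sInf_mem (H.tl_ne Q)

theorem tl_c (Q : CubeOf μ) : (tl α β Q).c = Q.c := rfl

theorem tl_l (Q : CubeOf μ) : Q.ℓ ≤ (tl α β Q).ℓ := by
  have : (1 : ℝ) ≤ 2 ^ (tIdx α β Q) := one_le_pow₀ (by norm_num)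
  exact le_mul_of_one_le_left Q.ℓ_pos.le this

theorem tl_sub (Q : CubeOf μ) : Q.set ⊆ (tl α β Q).set := cb_mono Q.c (tl_l Q)

theorem tl_pz (Q : CubeOf μ) : pz Q.ℓ ≤ pz (tl α β Q).ℓ := pz_mono Q.ℓ_pos (tl_l Q)

theorem Ctx.tl_S (H : Ctx n m C₀ α β μ) (Q : CubeOf μ) :
    Sg μ n Q.c (pz Q.ℓ) (pz (tl α β Q).ℓ + 3) ≤ bD d n m C₀ β := by
  have h1 : pz (tl α β Q).ℓ = pz Q.ℓ + tIdx α β Q := by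
    have := pz_two_pow Q.ℓ_pos (tIdx α β Q)
    rw [add_comm]; exact this
  rw [h1]
  apply H.chainS Q.c Q.ℓ_pos
  intro k hk hcon
  exact Nat.notMem_of_lt_sInf hk hcon

theorem tl_of_doubling {Q : CubeOf μ} (h : IsDoubling μ α β Q) : tl α β Q = Q := by
  have : tIdx α β Q = 0 := by
    apply Nat.sInf_eq_zero.2
    left
    have : Q.pow2 0 = Q := by
      cases Q; simp [CubeOf.pow2]
    show IsDoubling μ α β (Q.pow2 0)
    rwa [this]
  unfold tl
  rw [this]
  cases Q; simp [CubeOf.pow2]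

end RBMOproof2

noncomputable section RBMOproof3

variable {d : ℕ} {μ : Measure (Euc d)} {n m : ℕ} {C₀ α β : ℝ}

def cE (d n m : ℕ) (C₀ β : ℝ) : ℝ := 2 ^ n * (bD d n m C₀ β + gA d n C₀)

def cT (d n m : ℕ) (C₀ β : ℝ) : ℝ :=
  1 + 2 ^ n * (2 ^ n + 2 * gA d n C₀ + 2 * cE d n m C₀ β)

theorem Ctx.cE_nonneg (H : Ctx n m C₀ α β μ) : 0 ≤ cE d n m C₀ β := by
  have := H.bD_nonneg
  have := H.A_nonneg
  unfold cE; positivity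

theorem Ctx.bD_le_cE (H : Ctx n m C₀ α β μ) : bD d n m C₀ β ≤ cE d n m C₀ β := by
  have h1 := H.bD_nonneg
  have h2 := H.A_nonneg
  unfold cE
  have : (1 : ℝ) ≤ 2 ^ n := one_le_pow₀ (by norm_num)
  nlinarith

/-- change of center after which the chain is bounded -/
theorem Ctx.Sg_move (H : Ctx n m C₀ α β μ) {x y : Euc d} {a b : ℤ}
    (hxy : ∀ i, |x i - y i| ≤ (2 : ℝ) ^ a / 2) (h : Sg μ n y a b ≤ bD d n m C₀ β) :
    Sg μ n x a b ≤ cE d n m C₀ β := by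
  refine (Sg_center H.hC H.hd H.hg hxy).trans ?_
  unfold cE
  gcongr

theorem Ctx.K_tilde (H : Ctx n m C₀ α β μ) {Q R : CubeOf μ} (h : Q.set ⊆ R.set) :
    ∃ S : CubeOf μ, IsDoubling μ α β S ∧ (tl α β Q).set ⊆ S.set ∧ (tl α β R).set ⊆ S.set ∧
      Kcoef n (tl α β Q) S ≤ cT d n m C₀ β * Kcoef n Q R ∧
      Kcoef n (tl α β R) S ≤ cT d n m C₀ β * Kcoef n Q R := by
  set M := max (tl α β Q).ℓ (tl α β R).ℓ with hM
  have hMQ : (tl α β Q).ℓ ≤ M := le_max_left _ _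
  have hMR : (tl α β R).ℓ ≤ M := le_max_right _ _
  have hMpos : 0 < M := (tl α β Q).ℓ_pos.trans_le hMQ
  let T : CubeOf μ := ⟨R.c, 2 ^ 1 * M, by positivity, R.c_mem⟩
  set S := tl α β T with hS
  have hTS : T.ℓ ≤ S.ℓ := tl_l T
  have hTl : T.ℓ = 2 * M := by simp [T]
  have hcen := sub_center h
  have hlen := sub_len H.hd h
  have hRM : R.ℓ ≤ M := (tl_l R).trans hMR
  have hpT : pz T.ℓ = 1 + pz M := by
    have := pz_two_pow hMpos 1
    simpa [T] using this
  have hpQR : pz Q.ℓ ≤ pz R.ℓ := pz_mono Q.ℓ_pos hlen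
  have hpRM : pz R.ℓ ≤ pz M := pz_mono R.ℓ_pos hRM
  have hS_S : Sg μ n R.c (pz T.ℓ) (pz S.ℓ + 1) ≤ bD d n m C₀ β :=
    (Sg_mono n _ le_rfl (by rw [hS]; omega)).trans (H.tl_S T)
  have hQ_S := H.tl_S Q
  have hR_S := H.tl_S R
  have hcR : ∀ i, |Q.c i - R.c i| ≤ (2 : ℝ) ^ (pz R.ℓ) / 2 := fun i => by
    linarith [hcen i, le_pz R.ℓ]
  have hcR' : ∀ i, |R.c i - Q.c i| ≤ (2 : ℝ) ^ (pz R.ℓ) / 2 := fun i => by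
    rw [abs_sub_comm]; exact hcR i
  have hcT : ∀ i, |Q.c i - R.c i| ≤ (2 : ℝ) ^ (pz T.ℓ) / 2 := fun i => by
    have : (2 : ℝ) ^ (pz R.ℓ) ≤ 2 ^ (pz T.ℓ) := zpow_le_zpow_right₀ (by norm_num) (by omega)
    linarith [hcR i]
  have hE := H.cE_nonneg
  have hDE := H.bD_le_cE
  have hA := H.A_nonneg
  have hK := Kcoef_ge_one n Q R
  have hP : (1 : ℝ) ≤ 2 ^ n := one_le_pow₀ (by norm_num)
  -- middle pieces
  have mid : Sg μ n Q.c (pz R.ℓ) (pz T.ℓ) ≤ cE d n m C₀ β ∧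
      Sg μ n R.c (pz R.ℓ) (pz T.ℓ) ≤ cE d n m C₀ β := by
    rw [hpT]
    rcases le_total (tl α β Q).ℓ (tl α β R).ℓ with hle | hle
    · rw [hM, max_eq_right hle]
      have h1 : Sg μ n R.c (pz R.ℓ) (1 + pz (tl α β R).ℓ) ≤ bD d n m C₀ β :=
        (Sg_mono n _ le_rfl (by omega)).trans hR_S
      exact ⟨H.Sg_move hcR h1, h1.trans hDE⟩
    · rw [hM, max_eq_left hle]
      have h1 : Sg μ n Q.c (pz R.ℓ) (1 + pz (tl α β Q).ℓ) ≤ bD d n m C₀ β :=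
        (Sg_mono n _ hpQR (by omega)).trans hQ_S
      exact ⟨h1.trans hDE, H.Sg_move hcR' h1⟩
  refine ⟨S, H.tl_doubling T, ?_, ?_, ?_, ?_⟩
  · refine Subset.trans ?_ (tl_sub T)
    refine cb_subset fun i => ?_
    show |Q.c i - R.c i| ≤ (T.ℓ - (tl α β Q).ℓ) / 2
    linarith [hcen i]
  · refine Subset.trans ?_ (tl_sub T)
    refine cb_mono _ ?_
    show (tl α β R).ℓ ≤ T.ℓ
    linarith
  · have h1 := K_upper H.hd H.hg (Q := tl α β Q) (R := S) (by linarith)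
    rw [tl_c] at h1
    have h2 : Sg μ n Q.c (pz (tl α β Q).ℓ + 1) (pz S.ℓ + 1) ≤ Sg μ n Q.c (pz Q.ℓ) (pz S.ℓ + 1) :=
      Sg_mono n _ (by have := tl_pz (α := α) (β := β) Q; omega) le_rfl
    have h3 := Sg_concat (μ := μ) n Q.c (pz Q.ℓ) (pz R.ℓ - 1) (pz S.ℓ + 1)
    have h4 := Sg_concat (μ := μ) n Q.c (pz R.ℓ - 1) (pz R.ℓ) (pz S.ℓ + 1)
    have h5 := Sg_concat (μ := μ) n Q.c (pz R.ℓ) (pz T.ℓ) (pz S.ℓ + 1)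
    have h6 := Sg_short H.hC H.hd H.hg Q.c (a := pz R.ℓ - 1) (b := pz R.ℓ) 2 (by push_cast; omega)
    have h7 := K_lower H.hd H.hg Q R
    have h8 := H.Sg_move hcT hS_S
    have h9 := mid.1
    push_cast at h6
    have h10 : Sg μ n Q.c (pz (tl α β Q).ℓ + 1) (pz S.ℓ + 1) ≤
        (2 ^ n + 2 * gA d n C₀ + 2 * cE d n m C₀ β) * Kcoef n Q R := by nlinarith
    have h11 := mul_le_mul_of_nonneg_left h10 (show (0:ℝ) ≤ 2 ^ n by positivity)
    unfold cT
    nlinarith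
  · have h1 := K_upper H.hd H.hg (Q := tl α β R) (R := S) (by linarith)
    rw [tl_c] at h1
    have h2 : Sg μ n R.c (pz (tl α β R).ℓ + 1) (pz S.ℓ + 1) ≤ Sg μ n R.c (pz R.ℓ) (pz S.ℓ + 1) :=
      Sg_mono n _ (by have := tl_pz (α := α) (β := β) R; omega) le_rfl
    have h5 := Sg_concat (μ := μ) n R.c (pz R.ℓ) (pz T.ℓ) (pz S.ℓ + 1)
    have h9 := mid.2
    have h10 : Sg μ n R.c (pz (tl α β R).ℓ + 1) (pz S.ℓ + 1) ≤
        (2 ^ n + 2 * gA d n C₀ + 2 * cE d n m C₀ β) * Kcoef n Q R := by nlinarith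
    have h11 := mul_le_mul_of_nonneg_left h10 (show (0:ℝ) ≤ 2 ^ n by positivity)
    unfold cT
    nlinarith

theorem Ctx.cT_pos (H : Ctx n m C₀ α β μ) : 1 ≤ cT d n m C₀ β := by
  have hE := H.cE_nonneg
  have hA := H.A_nonneg
  unfold cT
  have : 0 ≤ 2 ^ n * (2 ^ n + 2 * gA d n C₀ + 2 * cE d n m C₀ β) := by positivity
  linarith

theorem ofReal_tri (a b c : ℝ) :
    ENNReal.ofReal |a - c| ≤ ENNReal.ofReal |a - b| + ENNReal.ofReal |b - c| := by
  rw [← ENNReal.ofReal_add (abs_nonneg _) (abs_nonneg _)]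
  exact ENNReal.ofReal_le_ofReal (abs_sub_le _ _ _)

theorem ofReal_comm (a b : ℝ) : ENNReal.ofReal |a - b| = ENNReal.ofReal |b - a| := by
  rw [abs_sub_comm]

theorem Ctx.tilde_cmp (H : Ctx n m C₀ α β μ) (g : CubeOf μ → ℝ) (C : ℝ≥0∞)
    (hgC : ∀ Q R : CubeOf μ, Q.set ⊆ R.set → IsDoubling μ α β Q → IsDoubling μ α β R →
      ENNReal.ofReal |g Q - g R| ≤ C * ENNReal.ofReal (Kcoef n Q R))
    {Q R : CubeOf μ} (h : Q.set ⊆ R.set) :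
    ENNReal.ofReal |g (tl α β Q) - g (tl α β R)| ≤
      C * ENNReal.ofReal (2 * cT d n m C₀ β * Kcoef n Q R) := by
  obtain ⟨S, hS, h1, h2, h3, h4⟩ := H.K_tilde h
  have e1 := hgC _ _ h1 (H.tl_doubling Q) hS
  have e2 := hgC _ _ h2 (H.tl_doubling R) hS
  rw [ofReal_comm] at e2
  have hc : 0 ≤ cT d n m C₀ β * Kcoef n Q R :=
    mul_nonneg (by linarith [H.cT_pos]) (by linarith [Kcoef_ge_one n Q R])
  calc _ ≤ _ := ofReal_tri _ (g S) _
    _ ≤ C * ENNReal.ofReal (cT d n m C₀ β * Kcoef n Q R) +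
        C * ENNReal.ofReal (cT d n m C₀ β * Kcoef n Q R) := by
      refine add_le_add (e1.trans ?_) (e2.trans ?_) <;> gcongr
    _ = _ := by
      rw [← mul_add, ← ENNReal.ofReal_add hc hc]
      congr 2; ring

/-- the coefficient from a small cube to the doubling cube above `2Q` -/
theorem Ctx.K_small (H : Ctx n m C₀ α β μ) {P Q : CubeOf μ} (hc : P.c ∈ Q.set)
    (hl : P.ℓ ≤ Q.ℓ) (p0 : ℤ) (k : ℕ) (hk : pz Q.ℓ < p0 + k) :
    Kcoef n P (tl α β (Q.pow2 1)) ≤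
      1 + 2 ^ n * (Sg μ n P.c (pz P.ℓ + 1) p0 + (k + 1) * gA d n C₀ + cE d n m C₀ β) := by
  set T := Q.pow2 1 with hT
  have hTl : T.ℓ = 2 * Q.ℓ := by simp [hT, CubeOf.pow2]
  have hTp : pz T.ℓ = 1 + pz Q.ℓ := by
    have := pz_two_pow Q.ℓ_pos 1
    simpa [hT, CubeOf.pow2] using this
  have hle := tl_l (α := α) (β := β) T
  have hQp := Q.ℓ_pos
  have h1 := K_upper H.hd H.hg (Q := P) (R := tl α β T) (by linarith)
  have h2 := Sg_concat (μ := μ) n P.c (pz P.ℓ + 1) p0 (pz (tl α β T).ℓ + 1)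
  have h3 := Sg_concat (μ := μ) n P.c p0 (pz T.ℓ) (pz (tl α β T).ℓ + 1)
  have h4 := Sg_short H.hC H.hd H.hg P.c (a := p0) (b := pz T.ℓ) (k + 1) (by push_cast; omega)
  have h5 : Sg μ n P.c (pz T.ℓ) (pz (tl α β T).ℓ + 1) ≤ cE d n m C₀ β := by
    refine H.Sg_move (y := Q.c) ?_ ?_
    · intro i
      have := hc i
      have := le_pz T.ℓ
      linarith
    · exact (Sg_mono n _ le_rfl (by omega)).trans (H.tl_S T)
  push_cast at h4
  have h6 : Sg μ n P.c (pz P.ℓ + 1) (pz (tl α β T).ℓ + 1) ≤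
      Sg μ n P.c (pz P.ℓ + 1) p0 + (k + 1) * gA d n C₀ + cE d n m C₀ β := by linarith
  have h7 := mul_le_mul_of_nonneg_left h6 (show (0:ℝ) ≤ 2 ^ n by positivity)
  linarith

theorem Ctx.K_two (H : Ctx n m C₀ α β μ) (Q : CubeOf μ) :
    Kcoef n Q (Q.pow2 1) ≤ cT d n m C₀ β := by
  have hTp : pz (Q.pow2 1).ℓ = 1 + pz Q.ℓ := by
    have := pz_two_pow Q.ℓ_pos 1
    simpa [CubeOf.pow2] using this
  have hTl : (Q.pow2 1).ℓ = 2 * Q.ℓ := by simp [CubeOf.pow2]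
  have hQp := Q.ℓ_pos
  have h1 := K_upper H.hd H.hg (Q := Q) (R := Q.pow2 1) (by linarith)
  have h4 := Sg_short H.hC H.hd H.hg Q.c (a := pz Q.ℓ + 1) (b := pz (Q.pow2 1).ℓ + 1) 2
    (by push_cast; omega)
  have hE := H.cE_nonneg
  push_cast at h4
  have h6 : Sg μ n Q.c (pz Q.ℓ + 1) (pz (Q.pow2 1).ℓ + 1) ≤
      2 ^ n + 2 * gA d n C₀ + 2 * cE d n m C₀ β := by
    have : (0 : ℝ) < 2 ^ n := by positivity
    linarith
  have h7 := mul_le_mul_of_nonneg_left h6 (show (0:ℝ) ≤ 2 ^ n by positivity)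
  unfold cT
  linarith

theorem sub_two (Q : CubeOf μ) : Q.set ⊆ (Q.pow2 1).set := by
  have hQp := Q.ℓ_pos
  refine cb_mono Q.c ?_
  show Q.ℓ ≤ 2 ^ 1 * Q.ℓ
  linarith

end RBMOproof3

noncomputable section RBMOproof4

variable {d : ℕ} {μ : Measure (Euc d)} {n m : ℕ} {C₀ α β : ℝ}

theorem avg_le (hd : 1 ≤ d) (hg : GrowthBound μ n C₀) {f : Euc d → ℝ} (hf : LocallyIntegrable f μ)
    (Q : CubeOf μ) (a : ℝ) :
    ENNReal.ofReal |mQ μ Q f - a| * μ Q.set ≤ ∫⁻ x in Q.set, ENNReal.ofReal |f x - a| ∂μ := by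
  have hpos : 0 < μ Q.set := cb_pos Q.c_mem Q.ℓ_pos
  have htop : μ Q.set < ⊤ := cb_lt_top hd hg Q.c Q.ℓ
  have hint : IntegrableOn f Q.set μ := hf.integrableOn_isCompact (cb_compact Q.c Q.ℓ)
  have hr : 0 < (μ Q.set).toReal := ENNReal.toReal_pos hpos.ne' htop.ne
  have h1 : (mQ μ Q f - a) * (μ Q.set).toReal = ∫ x in Q.set, (f x - a) ∂μ := by
    have hc : Integrable (fun _ : Euc d => a) (μ.restrict Q.set) := by
      have : IntegrableOn (fun _ : Euc d => a) Q.set μ := integrableOn_const htop.ne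
      exact this
    rw [integral_sub hint hc]
    unfold mQ
    rw [setAverage_eq]
    simp only [measureReal_def, integral_const, smul_eq_mul, MeasurableSet.univ,
      Measure.restrict_apply, Set.univ_inter]
    field_simp
  have h2 := enorm_integral_le_lintegral_enorm (μ := μ.restrict Q.set) (fun x => f x - a)
  rw [← h1] at h2
  simp only [Real.enorm_eq_ofReal_abs] at h2
  rw [abs_mul, ENNReal.ofReal_mul (abs_nonneg _), abs_of_pos hr,
    ENNReal.ofReal_toReal htop.ne] at h2
  exact h2

theorem osc_le (S : Set (Euc d)) (f : Euc d → ℝ) (a b : ℝ) :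
    ∫⁻ x in S, ENNReal.ofReal |f x - b| ∂μ ≤
      ∫⁻ x in S, ENNReal.ofReal |f x - a| ∂μ + ENNReal.ofReal |a - b| * μ S := by
  calc _ ≤ ∫⁻ x in S, (ENNReal.ofReal |f x - a| + ENNReal.ofReal |a - b|) ∂μ :=
        lintegral_mono fun x => ofReal_tri _ _ _
    _ = _ := by
        rw [lintegral_add_right _ measurable_const]
        simp

theorem osc_mean (hd : 1 ≤ d) (hg : GrowthBound μ n C₀) {f : Euc d → ℝ}
    (hf : LocallyIntegrable f μ) (Q : CubeOf μ) (a : ℝ) :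
    ∫⁻ x in Q.set, ENNReal.ofReal |f x - mQ μ Q f| ∂μ ≤
      2 * ∫⁻ x in Q.set, ENNReal.ofReal |f x - a| ∂μ := by
  refine (osc_le Q.set f a (mQ μ Q f)).trans ?_
  rw [two_mul, ofReal_comm]
  gcongr
  exact avg_le hd hg hf Q a

theorem cb_eq_closedBall (x : Euc d) {r : ℝ} (hr : 0 ≤ r) (y : Euc d) :
    y ∈ cb x r ↔ WithLp.ofLp y ∈ closedBall (WithLp.ofLp x) (r / 2) := by
  rw [mem_closedBall, dist_pi_le_iff (by positivity)]
  simp [cb, Real.dist_eq]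

theorem bes_cover (d : ℕ) : ∃ N : ℕ, ∀ (E : Set (Euc d)) (r : Euc d → ℝ) (r0 : ℝ),
    (∀ x ∈ E, 0 < r x ∧ r x ≤ r0) → ∃ s : Fin N → Set (Euc d), (∀ i, s i ⊆ E) ∧
      (∀ i, (s i).Countable) ∧ (∀ i, (s i).PairwiseDisjoint (fun x => cb x (r x))) ∧
      E ⊆ ⋃ i, ⋃ x ∈ s i, cb x (r x) := by
  obtain ⟨N, τ, hτ, hN⟩ := HasBesicovitchCovering.no_satelliteConfig (α := Fin d → ℝ)
  refine ⟨N, fun E r r0 hr => ?_⟩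
  let q : Besicovitch.BallPackage E (Fin d → ℝ) :=
    { c := fun x => WithLp.ofLp x.1
      r := fun x => r x.1 / 2
      rpos := fun x => half_pos (hr x.1 x.2).1
      r_bound := r0 / 2
      r_le := fun x => by linarith [(hr x.1 x.2).2] }
  obtain ⟨s, hs1, hs2⟩ := Besicovitch.exist_disjoint_covering_families hτ hN q
  have hdis : ∀ i, (Subtype.val '' s i).PairwiseDisjoint (fun x => cb x (r x)) := by
    intro i
    rintro _ ⟨x, hx, rfl⟩ _ ⟨y, hy, rfl⟩ hxy
    have hne : x ≠ y := fun h => hxy (by rw [h])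
    have := hs1 i hx hy hne
    rw [Function.onFun, Set.disjoint_left] at this ⊢
    intro z hz1 hz2
    exact this ((cb_eq_closedBall _ (hr x.1 x.2).1.le _).1 hz1)
      ((cb_eq_closedBall _ (hr y.1 y.2).1.le _).1 hz2)
  refine ⟨fun i => Subtype.val '' s i, ?_, ?_, hdis, ?_⟩
  · rintro i _ ⟨x, _, rfl⟩; exact x.2
  · intro i
    refine (hdis i).countable_of_nonempty_interior ?_
    rintro _ ⟨x, _, rfl⟩
    refine ⟨x.1, ?_⟩
    exact interior_mono (ball_sub_cb _ _)
      (by rw [isOpen_ball.interior_eq]; exact mem_ball_self (half_pos (hr x.1 x.2).1))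
  · intro x hx
    have := hs2 ⟨⟨x, hx⟩, rfl⟩
    simp only [mem_iUnion] at this ⊢
    obtain ⟨i, j, hj, hxj⟩ := this
    exact ⟨i, j.1, ⟨j, hj, rfl⟩, (cb_eq_closedBall _ (hr j.1 j.2).1.le _).2 (ball_subset_closedBall hxj)⟩

theorem bes_int (d : ℕ) : ∃ N : ℕ, ∀ (μ : Measure (Euc d)) (φ : Euc d → ℝ≥0∞) (Q E Z : Set (Euc d))
    (r : Euc d → ℝ) (r0 : ℝ) (D : ℝ≥0∞), (Q ≤ᵐ[μ] E) →
    (∀ x ∈ E, 0 < r x ∧ r x ≤ r0) →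
    (∀ x ∈ E, cb x (r x) ⊆ Z) →
    (∀ x ∈ E, ∫⁻ y in cb x (r x), φ y ∂μ ≤ D * μ (cb x (r x))) →
    ∫⁻ y in Q, φ y ∂μ ≤ N * (D * μ Z) := by
  obtain ⟨N, hN⟩ := bes_cover d
  refine ⟨N, fun μ φ Q E Z r r0 D hQE hr hZ hφ => ?_⟩
  obtain ⟨s, hs1, hs2, hs3, hs4⟩ := hN E r r0 hr
  calc ∫⁻ y in Q, φ y ∂μ ≤ ∫⁻ y in ⋃ i, ⋃ x ∈ s i, cb x (r x), φ y ∂μ :=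
        lintegral_mono_set' (hQE.trans hs4.eventuallyLE)
    _ ≤ ∑' i : Fin N, ∫⁻ y in ⋃ x ∈ s i, cb x (r x), φ y ∂μ := lintegral_iUnion_le _ _
    _ ≤ ∑' i : Fin N, D * μ Z := by
        refine ENNReal.tsum_le_tsum fun i => ?_
        have := (hs2 i).to_subtype
        rw [biUnion_eq_iUnion]
        calc _ ≤ ∑' x : s i, ∫⁻ y in cb x.1 (r x.1), φ y ∂μ := lintegral_iUnion_le _ _
          _ ≤ ∑' x : s i, D * μ (cb x.1 (r x.1)) :=
              ENNReal.tsum_le_tsum fun x => hφ x.1 (hs1 i x.2)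
          _ = D * ∑' x : s i, μ (cb x.1 (r x.1)) := ENNReal.tsum_mul_left
          _ = D * μ (⋃ x ∈ s i, cb x (r x)) := by
              rw [measure_biUnion (hs2 i) (hs3 i) fun x _ => (cb_closed _ _).measurableSet]
          _ ≤ D * μ Z := by
              gcongr
              exact iUnion₂_subset fun x hx => hZ x (hs1 i hx)
    _ = N * (D * μ Z) := by simp

theorem fin_int (d : ℕ) (s : ℝ) (hs : 0 < s) : ∃ N : ℕ, ∀ (μ : Measure (Euc d))
    (φ : Euc d → ℝ≥0∞) (c : Euc d) (l : ℝ) (E : Set (Euc d)) (W : ℝ≥0∞), 0 < l →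
    (cb c l ≤ᵐ[μ] E) →
    (∀ x ∈ E, ∫⁻ y in cb x (s * l), φ y ∂μ ≤ W) →
    ∫⁻ y in cb c l, φ y ∂μ ≤ N * W := by
  obtain ⟨t, -, htf, ht⟩ := finite_cover_balls_of_compact (cb_compact (0 : Euc d) 1)
    (show 0 < s / 2 / 2 by positivity)
  have := htf.fintype
  refine ⟨Fintype.card t, fun μ φ c l E W hl hE hW => ?_⟩
  have hsub : cb c l ∩ E ⊆ ⋃ z : t, (cb (c + l • z.1) (s / 2 * l) ∩ E) := by
    rintro y ⟨hy, hyE⟩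
    have h1 : l⁻¹ • (y - c) ∈ cb (0 : Euc d) 1 := by
      intro i
      have := hy i
      simp only [PiLp.smul_apply, PiLp.sub_apply, smul_eq_mul, PiLp.zero_apply, sub_zero]
      rw [abs_mul, abs_of_pos (inv_pos.2 hl), inv_mul_le_iff₀ hl]
      linarith
    have h2 := ht h1
    simp only [mem_iUnion] at h2 ⊢
    obtain ⟨z, hz, hyz⟩ := h2
    refine ⟨⟨z, hz⟩, ?_, hyE⟩
    have h3 := ball_sub_cb _ _ hyz
    intro i
    have h4 := h3 i
    simp only [PiLp.smul_apply, PiLp.sub_apply, smul_eq_mul, PiLp.add_apply] at h4 ⊢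
    have e : y i - (c i + l * z i) = l * (l⁻¹ * (y i - c i) - z i) := by
      field_simp
      ring
    rw [e, abs_mul, abs_of_pos hl]
    nlinarith
  have hae : (cb c l : Set (Euc d)) ≤ᵐ[μ] ⋃ z : t, (cb (c + l • z.1) (s / 2 * l) ∩ E) := by
    filter_upwards [hE] with y hy hyc
    exact hsub ⟨hyc, hy hyc⟩
  calc _ ≤ _ := lintegral_mono_set' hae
    _ ≤ ∑' z : t, ∫⁻ y in cb (c + l • z.1) (s / 2 * l) ∩ E, φ y ∂μ := lintegral_iUnion_le _ _
    _ ≤ ∑' z : t, W := by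
        refine ENNReal.tsum_le_tsum fun z => ?_
        rcases (cb (c + l • z.1) (s / 2 * l) ∩ E).eq_empty_or_nonempty with h0 | ⟨x, hx1, hx2⟩
        · rw [h0]; simp
        · refine (lintegral_mono_set ?_).trans (hW x hx2)
          rintro y ⟨hy, -⟩ i
          have h1 := hy i
          have h2 := hx1 i
          rw [abs_sub_comm] at h2
          have h3 := abs_sub_le (y i) ((c + l • z.1) i) (x i)
          linarith
    _ = _ := by simp

end RBMOproof4

noncomputable section RBMOproof5

variable {d : ℕ} {μ : Measure (Euc d)} {n m : ℕ} {C₀ α β : ℝ}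

theorem pz_shift (s : ℝ) (hs : 0 < s) : ∃ k : ℕ, ∀ l : ℝ, 0 < l → pz l < pz (s * l) + k := by
  obtain ⟨k, hk⟩ := pow_unbounded_of_one_lt (1 / s) (one_lt_two (α := ℝ))
  refine ⟨k + 1, fun l hl => ?_⟩
  rw [div_lt_iff₀ hs] at hk
  have h1 : pz l ≤ pz (2 ^ k * (s * l)) := pz_mono hl (by nlinarith)
  rw [pz_two_pow (by positivity)] at h1
  push_cast
  omega

theorem max_doubling {x : Euc d} {β : ℝ} (l0 : ℝ)
    (h : ∃ r : ℝ, 0 < r ∧ r ≤ l0 ∧ μ (cb x (2 * r)) ≤ ENNReal.ofReal β * μ (cb x r)) :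
    ∃ r : ℝ, 0 < r ∧ r ≤ l0 ∧ μ (cb x (2 * r)) ≤ ENNReal.ofReal β * μ (cb x r) ∧
      ∀ k : ℕ, 1 ≤ k → 2 ^ k * r ≤ l0 →
        ¬ (μ (cb x (2 * (2 ^ k * r))) ≤ ENNReal.ofReal β * μ (cb x (2 ^ k * r))) := by
  set S := {r : ℝ | 0 < r ∧ r ≤ l0 ∧ μ (cb x (2 * r)) ≤ ENNReal.ofReal β * μ (cb x r)} with hS
  have hne : S.Nonempty := h
  have hbdd : BddAbove S := ⟨l0, fun r hr => hr.2.1⟩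
  have hpos : 0 < sSup S := by
    obtain ⟨r, hr⟩ := hne
    exact hr.1.trans_le (le_csSup hbdd hr)
  obtain ⟨r, hr, hlt⟩ := exists_lt_of_lt_csSup hne (half_lt_self hpos)
  refine ⟨r, hr.1, hr.2.1, hr.2.2, fun k hk hkl hcon => ?_⟩
  have hr0 := hr.1
  have : 2 ^ k * r ≤ sSup S := le_csSup hbdd ⟨by positivity, hkl, hcon⟩
  have h2 : (2 : ℝ) ^ 1 ≤ 2 ^ k := pow_le_pow_right₀ (by norm_num) hk
  nlinarith

theorem Ctx.max_S (H : Ctx n 1 C₀ 2 β μ) {x : Euc d} {r l0 : ℝ} (hr : 0 < r) (hl : 0 < l0)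
    (h : ∀ k : ℕ, 1 ≤ k → 2 ^ k * r ≤ l0 →
        ¬ (μ (cb x (2 * (2 ^ k * r))) ≤ ENNReal.ofReal β * μ (cb x (2 ^ k * r)))) :
    Sg μ n x (pz r + 1) (pz l0) ≤ bD d n 1 C₀ β := by
  have hex : ∃ N : ℕ, l0 < 2 ^ N * (2 * r) := by
    obtain ⟨k, hk⟩ := pow_unbounded_of_one_lt (l0 / (2 * r)) (one_lt_two (α := ℝ))
    exact ⟨k, by rwa [div_lt_iff₀ (by positivity)] at hk⟩
  have h1 := H.chainS x (show 0 < 2 * r by positivity) (Nat.find hex) (by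
    intro k hk
    have h2 := Nat.find_min hex hk
    have e : (2 : ℝ) ^ k * (2 * r) = 2 ^ (k + 1) * r := by rw [pow_succ]; ring
    rw [e] at h2 ⊢
    exact h (k + 1) (by omega) (not_lt.1 h2))
  have h3 := Nat.find_spec hex
  have h4 := pz_mono hl h3.le
  rw [pz_two_pow (by positivity)] at h4
  have h5 : pz (2 * r) = 1 + pz r := by simpa using pz_two_pow hr 1
  refine (Sg_mono n x ?_ ?_).trans h1
  · omega
  · omega

theorem osc_bes (d n : ℕ) (C₀ β η : ℝ) (hη : 1 < η) (hη2 : η ≤ 2) : ∃ C : ℝ, 1 ≤ C ∧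
    ∀ μ : Measure (Euc d), Ctx n 1 C₀ 2 β μ → SmallDoublingAE μ β →
    ∀ (f : Euc d → ℝ) (Cc : ℝ≥0∞), CondC μ n β f Cc → ∀ Q : CubeOf μ,
      ∫⁻ x in Q.set, ENNReal.ofReal |f x - mQ μ (tl 2 β Q) f| ∂μ ≤
        ENNReal.ofReal C * Cc * μ (Q.dil η) := by
  obtain ⟨N, hN⟩ := bes_int d
  obtain ⟨k, hk⟩ := pz_shift (η - 1) (by linarith)
  set c1 : ℝ := 1 + 2 ^ n * (bD d n 1 C₀ β + (k + 1) * gA d n C₀ + cE d n 1 C₀ β) with hc1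
  set c2 : ℝ := 2 * cT d n 1 C₀ β * cT d n 1 C₀ β with hc2
  refine ⟨max 1 (N * (1 + (c1 + c2))), le_max_left _ _, ?_⟩
  intro μ H hsm f Cc hCc Q
  have hQ := Q.ℓ_pos
  have hcT := H.cT_pos
  have hc1' : 0 ≤ c1 := by
    have := H.bD_nonneg
    have := H.A_nonneg
    have := H.cE_nonneg
    positivity
  have hc2' : 0 ≤ c2 := by positivity
  set l0 := (η - 1) * Q.ℓ with hl0
  have hl0p : 0 < l0 := mul_pos (by linarith) hQ
  have hl0Q : l0 ≤ Q.ℓ := by nlinarith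
  set E : Set (Euc d) := {x | x ∈ Q.set ∧ x ∈ measSupp μ ∧ ∃ r : ℝ, 0 < r ∧ r ≤ l0 ∧
    μ (cb x (2 * r)) ≤ ENNReal.ofReal β * μ (cb x r)} with hE
  have hQE : Q.set ≤ᵐ[μ] E := by
    filter_upwards [hsm] with x hx hxQ
    obtain ⟨P, hP1, hP2, hP3⟩ := hx l0 hl0p
    refine ⟨hxQ, hP1 ▸ P.c_mem, P.ℓ, P.ℓ_pos, hP2.le, ?_⟩
    rw [← hP1]
    exact hP3
  have hch : ∀ x : Euc d, ∃ r : ℝ, x ∈ E → (0 < r ∧ r ≤ l0 ∧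
      μ (cb x (2 * r)) ≤ ENNReal.ofReal β * μ (cb x r) ∧
      ∀ k : ℕ, 1 ≤ k → 2 ^ k * r ≤ l0 →
        ¬ (μ (cb x (2 * (2 ^ k * r))) ≤ ENNReal.ofReal β * μ (cb x (2 ^ k * r)))) := by
    intro x
    by_cases hx : x ∈ E
    · obtain ⟨r, hr⟩ := max_doubling l0 hx.2.2
      exact ⟨r, fun _ => hr⟩
    · exact ⟨0, fun h => absurd h hx⟩
  choose r hr using hch
  have hZ : ∀ x ∈ E, cb x (r x) ⊆ Q.dil η := by
    intro x hx
    refine cb_subset (y := Q.c) (s := η * Q.ℓ) fun i => ?_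
    have h1 := hx.1 i
    have h2 := (hr x hx).2.1
    rw [hl0] at h2
    linarith
  have hdil : Q.dil η ⊆ (Q.pow2 1).set := by
    refine cb_mono Q.c ?_
    show η * Q.ℓ ≤ 2 ^ 1 * Q.ℓ
    nlinarith
  set R := tl 2 β (Q.pow2 1) with hR
  have e2 := H.tilde_cmp (fun Q => mQ μ Q f) Cc hCc.2 (sub_two Q)
  have e2' : ENNReal.ofReal |mQ μ R f - mQ μ (tl 2 β Q) f| ≤ Cc * ENNReal.ofReal c2 := by
    rw [ofReal_comm]
    refine e2.trans ?_
    gcongr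
    rw [hc2]
    exact mul_le_mul_of_nonneg_left (H.K_two Q) (by positivity)
  have main := hN μ (fun x => ENNReal.ofReal |f x - mQ μ (tl 2 β Q) f|) Q.set E (Q.dil η) r l0
    (Cc * ENNReal.ofReal (1 + (c1 + c2))) hQE (fun x hx => ⟨(hr x hx).1, (hr x hx).2.1⟩) hZ ?_
  · refine main.trans ?_
    have hN2 : (N : ℝ≥0∞) * ENNReal.ofReal (1 + (c1 + c2)) ≤ ENNReal.ofReal (max 1 (N * (1 + (c1 + c2)))) := by
      rw [← ENNReal.ofReal_natCast, ← ENNReal.ofReal_mul (by positivity)]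
      exact ENNReal.ofReal_le_ofReal (le_max_right _ _)
    calc _ = ((N : ℝ≥0∞) * ENNReal.ofReal (1 + (c1 + c2))) * Cc * μ (Q.dil η) := by ring
      _ ≤ _ := by gcongr
  · intro x hx
    let P : CubeOf μ := ⟨x, r x, (hr x hx).1, hx.2.1⟩
    have hPd : IsDoubling μ 2 β P := (hr x hx).2.2.1
    have hPR : P.set ⊆ R.set := ((hZ x hx).trans hdil).trans (tl_sub _)
    have hK : Kcoef n P R ≤ c1 := by
      have h1 := H.K_small (P := P) (Q := Q) hx.1 ((hr x hx).2.1.trans hl0Q) (pz l0) k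
        (hk Q.ℓ hQ)
      refine h1.trans ?_
      have h2 := H.max_S (hr x hx).1 hl0p (hr x hx).2.2.2
      rw [hc1]
      have h3 : Sg μ n P.c (pz P.ℓ + 1) (pz l0) ≤ bD d n 1 C₀ β := h2
      gcongr
    have e1 : ENNReal.ofReal |mQ μ P f - mQ μ R f| ≤ Cc * ENNReal.ofReal c1 :=
      (hCc.2 P R hPR hPd (H.tl_doubling _)).trans (by gcongr)
    have e3 : ENNReal.ofReal |mQ μ P f - mQ μ (tl 2 β Q) f| ≤ Cc * ENNReal.ofReal (c1 + c2) := by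
      refine (ofReal_tri _ (mQ μ R f) _).trans ((add_le_add e1 e2').trans ?_)
      rw [ENNReal.ofReal_add hc1' hc2', mul_add]
    refine (osc_le P.set f (mQ μ P f) _).trans ?_
    rw [ENNReal.ofReal_add zero_le_one (by positivity), mul_add, add_mul]
    refine add_le_add ?_ ?_
    · rw [ENNReal.ofReal_one, mul_one]; exact hCc.1 P hPd
    · exact mul_le_mul' e3 le_rfl

theorem dil_pos (Q : CubeOf μ) {ρ : ℝ} (hρ : 0 < ρ) : 0 < μ (Q.dil ρ) :=
  cb_pos Q.c_mem (mul_pos hρ Q.ℓ_pos)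

theorem Ctx.ratio_le (H : Ctx n m C₀ α β μ) {ρ : ℝ} (hρm : ρ ≤ α) {R : CubeOf μ}
    (hR : IsDoubling μ α β R) : μ (R.dil ρ) / μ R.set ≤ ENNReal.ofReal β := by
  apply ENNReal.div_le_of_le_mul
  refine le_trans (measure_mono (cb_mono R.c ?_)) hR
  exact mul_le_mul_of_nonneg_right hρm R.ℓ_pos.le

theorem Ctx.condB_doubling (H : Ctx n m C₀ α β μ) {ρ : ℝ} (hρm : ρ ≤ α)
    {f : Euc d → ℝ} {Cb : ℝ≥0∞} (hCb : CondB μ n ρ f Cb) (Q R : CubeOf μ) (h : Q.set ⊆ R.set)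
    (hQ : IsDoubling μ α β Q) (hR : IsDoubling μ α β R) :
    ENNReal.ofReal |mQ μ Q f - mQ μ R f| ≤
      (Cb * ENNReal.ofReal (2 * β)) * ENNReal.ofReal (Kcoef n Q R) := by
  have hβ0 : 0 < β := lt_trans (by positivity) H.hβ
  refine (hCb.2 Q R h).trans ?_
  rw [two_mul, ENNReal.ofReal_add hβ0.le hβ0.le, mul_right_comm]
  gcongr
  · exact H.ratio_le hρm hQ
  · exact H.ratio_le hρm hR

theorem osc_fin (d n m : ℕ) (C₀ α β ρ : ℝ) (hρ : 1 < ρ) (hρm : ρ ≤ α) : ∃ C : ℝ, 1 ≤ C ∧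
    ∀ μ : Measure (Euc d), Ctx n m C₀ α β μ → (∀ᵐ x ∂μ, x ∈ measSupp μ) →
    ∀ (f : Euc d → ℝ) (Cb : ℝ≥0∞), LocallyIntegrable f μ → CondB μ n ρ f Cb → ∀ Q : CubeOf μ,
      ∫⁻ x in Q.set, ENNReal.ofReal |f x - mQ μ (tl α β Q) f| ∂μ ≤
        ENNReal.ofReal C * Cb * μ (Q.dil 2) := by
  have hs : 0 < 1 / ρ := by positivity
  obtain ⟨N, hN⟩ := fin_int d (1 / ρ) hs
  obtain ⟨k, hk⟩ := pz_shift (1 / ρ) hs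
  set c1 : ℝ := 1 + 2 ^ n * (0 + (k + 1) * gA d n C₀ + cE d n m C₀ β) with hc1
  set c2 : ℝ := 2 * cT d n m C₀ β * cT d n m C₀ β with hc2
  refine ⟨max 1 (N * (1 + (c1 * (1 + β) + 2 * β * c2))), le_max_left _ _, ?_⟩
  intro μ H hsm f Cb hf hCb Q
  have hβ0 : 0 < β := lt_trans (by positivity) H.hβ
  have hQ := Q.ℓ_pos
  have hcT := H.cT_pos
  have hc1' : 0 ≤ c1 := by
    have := H.bD_nonneg
    have := H.A_nonneg
    have := H.cE_nonneg
    positivity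
  have hc2' : 0 ≤ c2 := by positivity
  set R := tl α β (Q.pow2 1) with hR
  have e2 := H.tilde_cmp (fun Q => mQ μ Q f) _ (H.condB_doubling hρm hCb) (sub_two Q)
  have e2' : ENNReal.ofReal |mQ μ R f - mQ μ (tl α β Q) f| ≤
      Cb * ENNReal.ofReal (2 * β * c2) := by
    rw [ofReal_comm, ENNReal.ofReal_mul (by positivity), ← mul_assoc]
    refine e2.trans ?_
    gcongr
    rw [hc2]
    exact mul_le_mul_of_nonneg_left (H.K_two Q) (by positivity)
  have hsl : 1 / ρ * Q.ℓ ≤ Q.ℓ := by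
    have : 1 / ρ ≤ 1 := by rw [div_le_one (by linarith)]; exact hρ.le
    nlinarith
  have hslp : 0 < 1 / ρ * Q.ℓ := by positivity
  have main := hN μ (fun x => ENNReal.ofReal |f x - mQ μ (tl α β Q) f|) Q.c Q.ℓ
    {x | x ∈ Q.set ∧ x ∈ measSupp μ}
    (Cb * ENNReal.ofReal (1 + (c1 * (1 + β) + 2 * β * c2)) * μ (Q.dil 2)) hQ ?_ ?_
  · refine main.trans ?_
    have hN2 : (N : ℝ≥0∞) * ENNReal.ofReal (1 + (c1 * (1 + β) + 2 * β * c2)) ≤ ENNReal.ofReal (max 1 (N * (1 + (c1 * (1 + β) + 2 * β * c2)))) := by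
      rw [← ENNReal.ofReal_natCast, ← ENNReal.ofReal_mul (by positivity)]
      exact ENNReal.ofReal_le_ofReal (le_max_right _ _)
    calc _ = ((N : ℝ≥0∞) * ENNReal.ofReal (1 + (c1 * (1 + β) + 2 * β * c2))) * Cb * μ (Q.dil 2) := by ring
      _ ≤ _ := by gcongr
  · filter_upwards [hsm] with x hx hxQ
    exact ⟨hxQ, hx⟩
  · rintro x ⟨hxQ, hxs⟩
    let P : CubeOf μ := ⟨x, 1 / ρ * Q.ℓ, hslp, hxs⟩
    have hρl : ρ * (1 / ρ * Q.ℓ) = Q.ℓ := by field_simp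
    have hPd : P.dil ρ ⊆ Q.dil 2 := by
      refine cb_subset (x := x) (r := ρ * (1 / ρ * Q.ℓ)) (y := Q.c) (s := 2 * Q.ℓ) fun i => ?_
      rw [hρl]
      have := hxQ i
      linarith
    have hPP : P.set ⊆ P.dil ρ := by
      refine cb_mono x ?_
      show 1 / ρ * Q.ℓ ≤ ρ * (1 / ρ * Q.ℓ)
      rw [hρl]; exact hsl
    have h2 : Q.dil 2 ⊆ (Q.pow2 1).set := by
      refine cb_mono Q.c ?_
      show 2 * Q.ℓ ≤ 2 ^ 1 * Q.ℓ
      linarith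
    have hPR : P.set ⊆ R.set := ((hPP.trans hPd).trans h2).trans (tl_sub _)
    have hK : Kcoef n P R ≤ c1 := by
      have h1 := H.K_small (P := P) (Q := Q) hxQ hsl (pz P.ℓ) k (hk Q.ℓ hQ)
      have h3 : Sg μ n P.c (pz P.ℓ + 1) (pz P.ℓ) = 0 := by simp [Sg]
      rw [h3] at h1
      exact h1
    have hμP : 0 < μ P.set := cb_pos hxs hslp
    have hμPt : μ P.set < ⊤ := cb_lt_top H.hd H.hg _ _
    have m1 : μ (P.dil ρ) ≤ μ (Q.dil 2) := measure_mono hPd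
    have m2 : μ P.set ≤ μ (Q.dil 2) := measure_mono (hPP.trans hPd)
    have e1 : ENNReal.ofReal |mQ μ P f - mQ μ R f| * μ P.set ≤
        Cb * ENNReal.ofReal (c1 * (1 + β)) * μ (Q.dil 2) := by
      calc _ ≤ (Cb * ENNReal.ofReal (Kcoef n P R) *
            (μ (P.dil ρ) / μ P.set + μ (R.dil ρ) / μ R.set)) * μ P.set :=
            mul_le_mul' (hCb.2 P R hPR) le_rfl
        _ ≤ (Cb * ENNReal.ofReal c1 *
            (μ (P.dil ρ) / μ P.set + ENNReal.ofReal β)) * μ P.set := by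
            gcongr
            exact H.ratio_le hρm (H.tl_doubling _)
        _ = Cb * ENNReal.ofReal c1 * (μ (P.dil ρ) + ENNReal.ofReal β * μ P.set) := by
            rw [mul_assoc, add_mul, ENNReal.div_mul_cancel hμP.ne' hμPt.ne]
        _ ≤ Cb * ENNReal.ofReal c1 * (μ (Q.dil 2) + ENNReal.ofReal β * μ (Q.dil 2)) := by
            gcongr
        _ = _ := by
            rw [ENNReal.ofReal_mul hc1', ENNReal.ofReal_add zero_le_one hβ0.le, ENNReal.ofReal_one]
            ring
    have e3 : ENNReal.ofReal |mQ μ P f - mQ μ (tl α β Q) f| * μ P.set ≤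
        Cb * ENNReal.ofReal (c1 * (1 + β) + 2 * β * c2) * μ (Q.dil 2) := by
      calc _ ≤ (ENNReal.ofReal |mQ μ P f - mQ μ R f| +
              ENNReal.ofReal |mQ μ R f - mQ μ (tl α β Q) f|) * μ P.set := by
            gcongr; exact ofReal_tri _ _ _
        _ ≤ Cb * ENNReal.ofReal (c1 * (1 + β)) * μ (Q.dil 2) +
            Cb * ENNReal.ofReal (2 * β * c2) * μ (Q.dil 2) := by
            rw [add_mul]
            exact add_le_add e1 (mul_le_mul' e2' m2)
        _ = _ := by
            rw [ENNReal.ofReal_add (by positivity) (by positivity)]; ring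
    refine (osc_le P.set f (mQ μ P f) _).trans ?_
    rw [ENNReal.ofReal_add zero_le_one (by positivity), mul_add, add_mul]
    refine add_le_add ?_ e3
    rw [ENNReal.ofReal_one, mul_one]; exact (hCb.1 P).trans (mul_le_mul' le_rfl m1)

end RBMOproof5
noncomputable section RBMOproof6

variable {d : ℕ} {μ : Measure (Euc d)} {n m : ℕ} {C₀ α β : ℝ}

theorem CondB.mono {ρ : ℝ} {f : Euc d → ℝ} {A B : ℝ≥0∞} (h : CondB μ n ρ f A) (hAB : A ≤ B) :
    CondB μ n ρ f B :=
  ⟨fun Q => (h.1 Q).trans (by gcongr), fun Q R hs => (h.2 Q R hs).trans (by gcongr)⟩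

theorem CondC.mono {f : Euc d → ℝ} {A B : ℝ≥0∞} (h : CondC μ n β f A) (hAB : A ≤ B) :
    CondC μ n β f B :=
  ⟨fun Q hQ => (h.1 Q hQ).trans (by gcongr),
    fun Q R hs h1 h2 => (h.2 Q R hs h1 h2).trans (by gcongr)⟩

theorem le_sInf_mul {S : Set ℝ≥0∞} {a t : ℝ≥0∞} (h0 : t ≠ 0) (ht : t ≠ ⊤)
    (h : ∀ C ∈ S, a ≤ C * t) : a ≤ sInf S * t := by
  rw [← ENNReal.div_le_iff h0 ht]
  exact le_sInf fun C hC => (ENNReal.div_le_iff h0 ht).2 (h C hC)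

theorem bound_norm (hd : 1 ≤ d) (hg : GrowthBound μ n C₀) (f : Euc d → ℝ) :
    RBMOBoundWith μ n β f (rbmoNorm μ n β f) := by
  refine ⟨fun Q => ?_, fun Q R hs h1 h2 => ?_⟩
  · exact le_sInf_mul (dil_pos Q two_pos).ne' (cb_lt_top hd hg Q.c (2 * Q.ℓ)).ne
      fun C hC => hC.1 Q
  · refine le_sInf_mul ?_ ENNReal.ofReal_ne_top fun C hC => hC.2 Q R hs h1 h2
    have := Kcoef_ge_one n Q R
    exact (ENNReal.ofReal_pos.2 (by linarith)).ne'

theorem a_to_c (hβ : 1 ≤ β) {f : Euc d → ℝ} {A : ℝ≥0∞} (h : RBMOBoundWith μ n β f A) :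
    CondC μ n β f (ENNReal.ofReal β * A) := by
  have hβ1 : 1 ≤ ENNReal.ofReal β := by simpa using hβ
  refine ⟨fun Q hQ => ?_, fun Q R hs h1 h2 => (h.2 Q R hs h1 h2).trans ?_⟩
  · have e : Q.tilde β = Q := tl_of_doubling hQ
    have h1 := h.1 Q
    rw [e] at h1
    refine h1.trans ?_
    calc _ ≤ A * (ENNReal.ofReal β * μ Q.set) := by gcongr; exact hQ
      _ = _ := by ring
  · gcongr
    exact le_mul_of_one_le_left (zero_le) hβ1

theorem norm_le {f : Euc d → ℝ} {A : ℝ≥0∞} (h : RBMOBoundWith μ n β f A) :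
    rbmoNorm μ n β f ≤ A := sInf_le (a := A) (s := {C | RBMOBoundWith μ n β f C}) h

theorem c_to (d n : ℕ) (C₀ β ρ : ℝ) (hρ : 1 < ρ) : ∃ c : ℝ, 1 ≤ c ∧
    ∀ μ : Measure (Euc d), Ctx n 1 C₀ 2 β μ → SmallDoublingAE μ β →
    ∀ (f : Euc d → ℝ) (Cc : ℝ≥0∞), LocallyIntegrable f μ → CondC μ n β f Cc →
      RBMOBoundWith μ n β f (ENNReal.ofReal c * Cc) ∧ CondB μ n ρ f (ENNReal.ofReal c * Cc) := by
  obtain ⟨c1, hc1, hosc⟩ := osc_bes d n C₀ β (min ρ 2) (lt_min hρ one_lt_two) (min_le_right _ _)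
  set kT : ℝ := max 1 (cT d n 1 C₀ β) with hkT
  have hkT1 : 1 ≤ kT := le_max_left _ _
  refine ⟨2 * c1 + 2 * kT, by linarith, ?_⟩
  intro μ H hsm f Cc hf hCc
  have o := hosc μ H hsm f Cc hCc
  have hcc : ENNReal.ofReal c1 ≤ ENNReal.ofReal (2 * c1 + 2 * kT) :=
    ENNReal.ofReal_le_ofReal (by linarith)
  have hc2 : 2 * ENNReal.ofReal c1 ≤ ENNReal.ofReal (2 * c1 + 2 * kT) := by
    rw [← ENNReal.ofReal_ofNat, ← ENNReal.ofReal_mul (by norm_num)]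
    exact ENNReal.ofReal_le_ofReal (by linarith)
  have hd2 : ∀ Q : CubeOf μ, Q.dil (min ρ 2) ⊆ Q.dil 2 := fun Q =>
    cb_mono Q.c (mul_le_mul_of_nonneg_right (min_le_right _ _) Q.ℓ_pos.le)
  have hdρ : ∀ Q : CubeOf μ, Q.dil (min ρ 2) ⊆ Q.dil ρ := fun Q =>
    cb_mono Q.c (mul_le_mul_of_nonneg_right (min_le_left _ _) Q.ℓ_pos.le)
  have hpos : ∀ Q : CubeOf μ, 0 < μ Q.set := fun Q => cb_pos Q.c_mem Q.ℓ_pos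
  have hfin : ∀ Q : CubeOf μ, μ Q.set < ⊤ := fun Q => cb_lt_top H.hd H.hg _ _
  refine ⟨⟨fun Q => ?_, fun Q R hs h1 h2 => ?_⟩, fun Q => ?_, fun Q R hs => ?_⟩
  · refine (o Q).trans ?_
    gcongr
    exact hd2 Q
  · refine (hCc.2 Q R hs h1 h2).trans ?_
    gcongr
    exact le_mul_of_one_le_left (zero_le) (by
      rw [ENNReal.one_le_ofReal]; linarith)
  · refine (osc_mean H.hd H.hg hf Q (mQ μ (tl 2 β Q) f)).trans ?_
    calc _ ≤ 2 * (ENNReal.ofReal c1 * Cc * μ (Q.dil ρ)) := by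
          gcongr; exact (o Q).trans (by gcongr; exact hdρ Q)
      _ = (2 * ENNReal.ofReal c1) * Cc * μ (Q.dil ρ) := by ring
      _ ≤ _ := by gcongr
  · have hav : ∀ P : CubeOf μ, ENNReal.ofReal |mQ μ P f - mQ μ (tl 2 β P) f| ≤
        ENNReal.ofReal c1 * Cc * (μ (P.dil ρ) / μ P.set) := by
      intro P
      rw [← mul_div_assoc, ENNReal.le_div_iff_mul_le (Or.inl (hpos P).ne') (Or.inl (hfin P).ne)]
      exact (avg_le H.hd H.hg hf P _).trans ((o P).trans (by gcongr; exact hdρ P))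
    have hK := Kcoef_ge_one n Q R
    have hk : 1 ≤ ENNReal.ofReal (Kcoef n Q R) := ENNReal.one_le_ofReal.2 hK
    have hr : 1 ≤ μ (Q.dil ρ) / μ Q.set + μ (R.dil ρ) / μ R.set := by
      refine le_trans ?_ le_self_add
      rw [ENNReal.le_div_iff_mul_le (Or.inl (hpos Q).ne') (Or.inl (hfin Q).ne), one_mul]
      exact measure_mono (cb_mono Q.c (le_mul_of_one_le_left Q.ℓ_pos.le hρ.le))
    have ht : ENNReal.ofReal |mQ μ (tl 2 β Q) f - mQ μ (tl 2 β R) f| ≤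
        Cc * (ENNReal.ofReal (2 * kT) * ENNReal.ofReal (Kcoef n Q R)) := by
      refine (H.tilde_cmp (fun Q => mQ μ Q f) Cc hCc.2 hs).trans ?_
      rw [← ENNReal.ofReal_mul (by positivity)]
      gcongr
      exact le_max_right _ _
    have hR := hav R
    rw [ofReal_comm] at hR
    set rr := μ (Q.dil ρ) / μ Q.set + μ (R.dil ρ) / μ R.set with hrr
    set k := ENNReal.ofReal (Kcoef n Q R) with hkd
    calc _ ≤ ENNReal.ofReal |mQ μ Q f - mQ μ (tl 2 β Q) f| +
          (ENNReal.ofReal |mQ μ (tl 2 β Q) f - mQ μ (tl 2 β R) f| +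
            ENNReal.ofReal |mQ μ (tl 2 β R) f - mQ μ R f|) :=
          (ofReal_tri _ (mQ μ (tl 2 β Q) f) _).trans (add_le_add le_rfl (ofReal_tri _ _ _))
      _ ≤ ENNReal.ofReal c1 * Cc * (μ (Q.dil ρ) / μ Q.set) +
          (Cc * (ENNReal.ofReal (2 * kT) * k) +
            ENNReal.ofReal c1 * Cc * (μ (R.dil ρ) / μ R.set)) :=
          add_le_add (hav Q) (add_le_add ht hR)
      _ = ENNReal.ofReal c1 * Cc * 1 * rr + ENNReal.ofReal (2 * kT) * Cc * k * 1 := by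
          rw [hrr]; ring
      _ ≤ ENNReal.ofReal (2 * c1) * Cc * k * rr + ENNReal.ofReal (2 * kT) * Cc * k * rr := by
          gcongr; linarith
      _ = _ := by
          rw [ENNReal.ofReal_add (by positivity) (by positivity)]; ring

theorem b_to_c (d n : ℕ) (C₀ β ρ : ℝ) (hρ : 1 < ρ) (hβ : 1 ≤ β) : ∃ c : ℝ, 1 ≤ c ∧
    ∀ μ : Measure (Euc d), Ctx n 1 C₀ 2 β μ → SmallDoublingAE μ β →
    ∀ (f : Euc d → ℝ) (Cb : ℝ≥0∞), LocallyIntegrable f μ → CondB μ n ρ f Cb →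
      CondC μ n β f (ENNReal.ofReal c * Cb) := by
  obtain ⟨m, hm⟩ := pow_unbounded_of_one_lt ρ (one_lt_two (α := ℝ))
  set b' : ℝ := (2 : ℝ) ^ (m * n) + 1 with hb'
  obtain ⟨c3, hc3, hosc⟩ := osc_fin d n m C₀ (2 ^ m) b' ρ hρ hm.le
  set kT : ℝ := max 1 (cT d n m C₀ b') with hkT
  have hkT1 : 1 ≤ kT := le_max_left _ _
  have hb0 : 0 < b' := by positivity
  have hβ0 : 0 < β := by linarith
  have hcβ : 1 ≤ c3 * β := by nlinarith
  have hbk : 0 < b' * kT := by positivity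
  refine ⟨2 * (c3 * β) + (2 * b') * (2 * kT), by nlinarith, ?_⟩
  intro μ H hsm f Cb hf hCb
  have H' : Ctx n m C₀ (2 ^ m) b' μ := ⟨H.hC, H.hd, H.hg, rfl, by rw [hb']; linarith⟩
  have hsm' : ∀ᵐ x ∂μ, x ∈ measSupp μ := by
    filter_upwards [hsm] with x hx
    obtain ⟨Q, hQ, _⟩ := hx 1 one_pos
    exact hQ ▸ Q.c_mem
  have o : ∀ Q : CubeOf μ, IsDoubling μ 2 β Q →
      ∫⁻ x in Q.set, ENNReal.ofReal |f x - mQ μ (tl (2 ^ m) b' Q) f| ∂μ ≤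
        ENNReal.ofReal (c3 * β) * Cb * μ Q.set := by
    intro Q hQ
    refine (hosc μ H' hsm' f Cb hf hCb Q).trans ?_
    calc _ ≤ ENNReal.ofReal c3 * Cb * (ENNReal.ofReal β * μ Q.set) := by gcongr; exact hQ
      _ = _ := by rw [ENNReal.ofReal_mul (by linarith)]; ring
  have hpos : ∀ Q : CubeOf μ, 0 < μ Q.set := fun Q => cb_pos Q.c_mem Q.ℓ_pos
  have hfin : ∀ Q : CubeOf μ, μ Q.set < ⊤ := fun Q => cb_lt_top H.hd H.hg _ _
  have hc2 : 2 * ENNReal.ofReal (c3 * β) ≤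
      ENNReal.ofReal (2 * (c3 * β) + (2 * b') * (2 * kT)) := by
    rw [← ENNReal.ofReal_ofNat, ← ENNReal.ofReal_mul (by norm_num)]
    exact ENNReal.ofReal_le_ofReal (by nlinarith)
  refine ⟨fun Q hQ => ?_, fun Q R hs h1 h2 => ?_⟩
  · refine (osc_mean H.hd H.hg hf Q (mQ μ (tl (2 ^ m) b' Q) f)).trans ?_
    calc _ ≤ 2 * (ENNReal.ofReal (c3 * β) * Cb * μ Q.set) := by
          gcongr; exact o Q hQ
      _ = (2 * ENNReal.ofReal (c3 * β)) * Cb * μ Q.set := by ring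
      _ ≤ _ := by gcongr
  · have hav : ∀ P : CubeOf μ, IsDoubling μ 2 β P →
        ENNReal.ofReal |mQ μ P f - mQ μ (tl (2 ^ m) b' P) f| ≤
        ENNReal.ofReal (c3 * β) * Cb := by
      intro P hP
      rw [← ENNReal.mul_le_mul_iff_left (hpos P).ne' (hfin P).ne]
      exact (avg_le H.hd H.hg hf P _).trans (o P hP)
    have hK := Kcoef_ge_one n Q R
    have hk : 1 ≤ ENNReal.ofReal (Kcoef n Q R) := ENNReal.one_le_ofReal.2 hK
    have ht : ENNReal.ofReal |mQ μ (tl (2 ^ m) b' Q) f - mQ μ (tl (2 ^ m) b' R) f| ≤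
        (Cb * ENNReal.ofReal (2 * b')) *
          (ENNReal.ofReal (2 * kT) * ENNReal.ofReal (Kcoef n Q R)) := by
      refine (H'.tilde_cmp (fun Q => mQ μ Q f) _ (H'.condB_doubling hm.le hCb) hs).trans ?_
      rw [← ENNReal.ofReal_mul (by positivity)]
      gcongr
      exact le_max_right _ _
    have hR := hav R h2
    rw [ofReal_comm] at hR
    set k := ENNReal.ofReal (Kcoef n Q R) with hkd
    calc _ ≤ ENNReal.ofReal |mQ μ Q f - mQ μ (tl (2 ^ m) b' Q) f| +
          (ENNReal.ofReal |mQ μ (tl (2 ^ m) b' Q) f - mQ μ (tl (2 ^ m) b' R) f| +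
            ENNReal.ofReal |mQ μ (tl (2 ^ m) b' R) f - mQ μ R f|) :=
          (ofReal_tri _ (mQ μ (tl (2 ^ m) b' Q) f) _).trans (add_le_add le_rfl (ofReal_tri _ _ _))
      _ ≤ ENNReal.ofReal (c3 * β) * Cb + ((Cb * ENNReal.ofReal (2 * b')) *
          (ENNReal.ofReal (2 * kT) * k) + ENNReal.ofReal (c3 * β) * Cb) :=
          add_le_add (hav Q h1) (add_le_add ht hR)
      _ = 2 * ENNReal.ofReal (c3 * β) * Cb * 1 +
          ENNReal.ofReal (2 * b') * ENNReal.ofReal (2 * kT) * Cb * k := by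
          ring
      _ ≤ 2 * ENNReal.ofReal (c3 * β) * Cb * k +
          ENNReal.ofReal (2 * b') * ENNReal.ofReal (2 * kT) * Cb * k := by
          gcongr
      _ = _ := by
          rw [ENNReal.ofReal_add (by positivity) (by positivity), ENNReal.ofReal_mul (p := 2) (q := c3 * β) zero_le_two,
            ENNReal.ofReal_mul (p := 2 * b') (by positivity), ENNReal.ofReal_ofNat]
          ring

end RBMOproof6

/-- Lemma 2.10: equivalent characterizations (a) ⟺ (b) ⟺ (c) of `RBMO(μ)`,
with comparable best constants. -/
theorem statement3 (d n : ℕ) (hn : 1 ≤ n) (hnd : n ≤ d) (C₀ βd ρ : ℝ) (hC₀ : 0 < C₀)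
    (hβ : (2 : ℝ) ^ n < βd) (hρ : 1 < ρ) :
    ∃ C : ℝ, 1 ≤ C ∧ ∀ μ : MeasureTheory.Measure (Euc d), GrowthBound μ n C₀ →
      SmallDoublingAE μ βd →
      ∀ f : Euc d → ℝ, MeasureTheory.LocallyIntegrable f μ →
        (∀ Cb : ℝ≥0∞, CondB μ n ρ f Cb → rbmoNorm μ n βd f ≤ ENNReal.ofReal C * Cb) ∧
        (∀ Cc : ℝ≥0∞, CondC μ n βd f Cc → rbmoNorm μ n βd f ≤ ENNReal.ofReal C * Cc) ∧
        CondB μ n ρ f (ENNReal.ofReal C * rbmoNorm μ n βd f) ∧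
        CondC μ n βd f (ENNReal.ofReal C * rbmoNorm μ n βd f) := by
  have hd : 1 ≤ d := hn.trans hnd
  have hβ1 : 1 ≤ βd := (one_le_pow₀ (by norm_num : (1 : ℝ) ≤ 2)).trans hβ.le
  obtain ⟨c1, hc1, h1⟩ := c_to d n C₀ βd ρ hρ
  obtain ⟨c2, hc2, h2⟩ := b_to_c d n C₀ βd ρ hρ hβ1
  have p12 : 1 ≤ c1 * c2 := by nlinarith
  have p1b : 1 ≤ c1 * βd := by nlinarith
  refine ⟨c1 * c2 + c1 * βd, by linarith, ?_⟩
  intro μ hg hsm f hf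
  have H : Ctx n 1 C₀ 2 βd μ := ⟨hC₀, hd, hg, by norm_num, by rwa [one_mul]⟩
  have hA := bound_norm (β := βd) hd hg f
  have hAC := a_to_c hβ1 hA
  refine ⟨fun Cb hCb => ?_, fun Cc hCc => ?_, ?_, ?_⟩
  · refine (norm_le (h1 μ H hsm f _ hf (h2 μ H hsm f Cb hf hCb)).1).trans ?_
    rw [← mul_assoc, ← ENNReal.ofReal_mul (by linarith)]
    gcongr
    linarith
  · refine (norm_le (h1 μ H hsm f Cc hf hCc).1).trans ?_
    gcongr
    nlinarith
  · refine (h1 μ H hsm f _ hf hAC).2.mono ?_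
    rw [← mul_assoc, ← ENNReal.ofReal_mul (by linarith)]
    gcongr
    linarith
  · refine hAC.mono ?_
    gcongr
    nlinarith
end

section
/- (John–Nirenberg inequality for RBMO(μ).) Let f ∈ RBMO(μ), and let {f_Q}_Q be a collection of real numbers, one per cube, such that sup_Q μ(2Q)^{-1} ∫_Q |f − f_Q| dμ ≤ C·‖f‖_* and |f_Q − f_R| ≤ C·K_{Q,R}·‖f‖_* for all cubes Q ⊂ R. Then for each ρ > 1 there exist positive constants C₅ and C₆, depending only on ρ, C, d, n, C₀ and β_d, such that for every cube Q and every λ > 0: μ{x ∈ Q : |f(x) − f_Q| > λ} ≤ C₅·μ(ρQ)·exp(−C₆·λ/‖f‖_*). -/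
/-!
Common definitions for formalizing Tolsa, "BMO, H¹, and Calderón–Zygmund
operators for non doubling measures".
-/

open MeasureTheory Metric Set Function
open scoped Classical
open scoped ENNReal NNReal BigOperators

section JN

variable {d : ℕ} {μ : MeasureTheory.Measure (Euc d)}

lemma jn_set_subset_ball (hd : 1 ≤ d) (Q : CubeOf μ) : Q.set ⊆ Metric.ball Q.c (d * Q.ℓ) := by
  intro y hy
  have hd' : (1:ℝ) ≤ d := by exact_mod_cast hd
  have hl := Q.ℓ_pos
  rw [Metric.mem_ball, EuclideanSpace.dist_eq, Real.sqrt_lt' (by positivity)]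
  have h1 : ∑ i, dist (y i) (Q.c i) ^ 2 ≤ ∑ _i : Fin d, (Q.ℓ / 2) ^ 2 := by
    apply Finset.sum_le_sum
    intro i _
    rw [Real.dist_eq]
    exact pow_le_pow_left₀ (abs_nonneg _) (hy i) 2
  simp only [Finset.sum_const, Finset.card_univ, Fintype.card_fin, nsmul_eq_mul] at h1
  have h2 : 0 < Q.ℓ ^ 2 := by positivity
  nlinarith [mul_pos (show (0:ℝ) < d by linarith) h2]

lemma jn_set_le (hd : 1 ≤ d) {n : ℕ} {C₀ : ℝ} (hg : GrowthBound μ n C₀) (Q : CubeOf μ) :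
    μ Q.set ≤ ENNReal.ofReal (C₀ * d ^ n * Q.ℓ ^ n) := by
  have hd' : (0:ℝ) < d := by exact_mod_cast hd
  refine (measure_mono (jn_set_subset_ball hd Q)).trans ((hg _ _ (mul_pos hd' Q.ℓ_pos)).trans ?_)
  rw [mul_pow, mul_assoc]

lemma jn_set_ne_top (hd : 1 ≤ d) {n : ℕ} {C₀ : ℝ} (hg : GrowthBound μ n C₀) (Q : CubeOf μ) :
    μ Q.set ≠ ⊤ := ((jn_set_le hd hg Q).trans_lt ENNReal.ofReal_lt_top).ne

lemma jn_set_pos (Q : CubeOf μ) : 0 < μ Q.set := by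
  have hl := Q.ℓ_pos
  refine (Q.c_mem (Q.ℓ/2) (by positivity)).trans_le (measure_mono ?_)
  intro y hy i
  rw [Metric.mem_ball, dist_eq_norm] at hy
  have := PiLp.norm_apply_le (y - Q.c) i
  simp only [PiLp.sub_apply, Real.norm_eq_abs] at this
  linarith

/-- density ratio -/
noncomputable def jnA (n : ℕ) (Q : CubeOf μ) (k : ℕ) : ℝ :=
  (μ ((Q.pow2 k).set)).toReal / ((2 ^ k * Q.ℓ) ^ n)

lemma jnA_nonneg (n : ℕ) (Q : CubeOf μ) (k : ℕ) : 0 ≤ jnA n Q k := by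
  have hl := Q.ℓ_pos
  unfold jnA; positivity

lemma jnA_le (hd : 1 ≤ d) {n : ℕ} {C₀ : ℝ} (hC₀ : 0 < C₀) (hg : GrowthBound μ n C₀) (Q : CubeOf μ)
    (k : ℕ) : jnA n Q k ≤ C₀ * d ^ n := by
  have hl := Q.ℓ_pos
  unfold jnA
  rw [div_le_iff₀ (by positivity)]
  exact ENNReal.toReal_le_of_le_ofReal (by positivity) (jn_set_le hd hg (Q.pow2 k))

lemma jn_NQR_le {Q R : CubeOf μ} {m : ℕ} (hm : 1 ≤ m) (h : R.ℓ ≤ 2 ^ m * Q.ℓ) : NQR Q R ≤ m :=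
  Nat.sInf_le ⟨hm, h⟩

lemma jn_K_le_sum {n : ℕ} {Q R : CubeOf μ} {m : ℕ} (hm : 1 ≤ m) (h : R.ℓ ≤ 2 ^ m * Q.ℓ) :
    Kcoef n Q R ≤ 1 + ∑ k ∈ Finset.Icc 1 m, jnA n Q k := by
  unfold Kcoef
  gcongr
  refine Finset.sum_le_sum_of_subset_of_nonneg
    (Finset.Icc_subset_Icc le_rfl (jn_NQR_le hm h)) (fun k _ _ => jnA_nonneg n Q k)

lemma jn_K_le (hd : 1 ≤ d) {n : ℕ} {C₀ : ℝ} (hC₀ : 0 < C₀) (hg : GrowthBound μ n C₀)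
    {Q R : CubeOf μ} {m : ℕ} (hm : 1 ≤ m) (h : R.ℓ ≤ 2 ^ m * Q.ℓ) :
    Kcoef n Q R ≤ 1 + m * (C₀ * d ^ n) := by
  refine (jn_K_le_sum hm h).trans ?_
  gcongr
  calc _ ≤ ∑ k ∈ Finset.Icc 1 m, C₀ * (d:ℝ) ^ n :=
        Finset.sum_le_sum (fun k _ => jnA_le hd hC₀ hg Q k)
    _ = _ := by simp

lemma jn_pow2_dil (Q : CubeOf μ) (k : ℕ) : (Q.pow2 k).dil 2 = (Q.pow2 (k+1)).set := by
  ext y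
  have e : (2:ℝ) * (2 ^ k * Q.ℓ) / 2 = 2 ^ (k+1) * Q.ℓ / 2 := by ring
  exact forall_congr' fun i => ⟨fun h => h.trans e.le, fun h => h.trans e.ge⟩

lemma jn_nondoubling (hd : 1 ≤ d) {n : ℕ} {C₀ βd : ℝ} (hg : GrowthBound μ n C₀)
    (hβ : (2 : ℝ) ^ n < βd) (Q : CubeOf μ) (k : ℕ) (h : ¬ IsDoubling μ 2 βd (Q.pow2 k)) :
    jnA n Q k ≤ (2 ^ n / βd) * jnA n Q (k+1) := by
  have hl := Q.ℓ_pos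
  have hβ0 : 0 < βd := lt_trans (by positivity) hβ
  unfold IsDoubling at h
  rw [jn_pow2_dil, not_le] at h
  have h2 := ENNReal.toReal_mono (jn_set_ne_top hd hg _) h.le
  rw [ENNReal.toReal_mul, ENNReal.toReal_ofReal hβ0.le] at h2
  unfold jnA
  rw [div_mul_div_comm, div_le_div_iff₀ (by positivity) (by positivity)]
  have : (0:ℝ) < 2 ^ n * (2 ^ k * Q.ℓ) ^ n := by positivity
  have e : ((2:ℝ) ^ (k+1) * Q.ℓ) ^ n = 2 ^ n * (2 ^ k * Q.ℓ) ^ n := by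
    rw [← mul_pow]; ring_nf
  rw [e]
  nlinarith [mul_le_mul_of_nonneg_left h2 this.le]

lemma jn_sum_nondoubling (hd : 1 ≤ d) {n : ℕ} {C₀ βd : ℝ} (hg : GrowthBound μ n C₀)
    (hβ : (2 : ℝ) ^ n < βd) (Q : CubeOf μ) (j : ℕ)
    (h : ∀ i, 1 ≤ i → i ≤ j → ¬ IsDoubling μ 2 βd (Q.pow2 i)) :
    ∑ k ∈ Finset.Icc 1 (j+1), jnA n Q k ≤ jnA n Q (j+1) / (1 - 2 ^ n / βd) := by
  have hβ0 : 0 < βd := lt_trans (by positivity) hβ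
  have hθ : (2:ℝ) ^ n / βd < 1 := (div_lt_one hβ0).2 hβ
  have hθ0 : 0 ≤ (2:ℝ) ^ n / βd := by positivity
  have h1 : 0 < 1 - (2:ℝ) ^ n / βd := by linarith
  induction j with
  | zero =>
    simp only [zero_add, Finset.Icc_self, Finset.sum_singleton]
    rw [le_div_iff₀ h1]
    nlinarith [jnA_nonneg n Q 1]
  | succ j ih =>
    rw [Finset.sum_Icc_succ_top (by omega)]
    have ih' := ih (fun i hi hij => h i hi (by omega))
    have h3 := jn_nondoubling hd hg hβ Q (j+1) (h _ (by omega) le_rfl)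
    rw [le_div_iff₀ h1] at *
    nlinarith

lemma jn_sum_nondoubling' (hd : 1 ≤ d) {n : ℕ} {C₀ βd : ℝ} (hC₀ : 0 < C₀) (hg : GrowthBound μ n C₀)
    (hβ : (2 : ℝ) ^ n < βd) (Q : CubeOf μ) (j : ℕ)
    (h : ∀ i, 1 ≤ i → i ≤ j → ¬ IsDoubling μ 2 βd (Q.pow2 i)) :
    ∑ k ∈ Finset.Icc 1 (j+1), jnA n Q k ≤ C₀ * d ^ n / (1 - 2 ^ n / βd) := by
  have hβ0 : 0 < βd := lt_trans (by positivity) hβ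
  have hθ : (2:ℝ) ^ n / βd < 1 := (div_lt_one hβ0).2 hβ
  refine (jn_sum_nondoubling hd hg hβ Q j h).trans ?_
  have h1 : 0 < 1 - (2:ℝ) ^ n / βd := by linarith
  gcongr
  exact jnA_le hd hC₀ hg Q _


lemma jn_tri (f : Euc d → ℝ) (S : Set (Euc d)) (a b : ℝ) :
    ∫⁻ x in S, ENNReal.ofReal |f x - a| ∂μ ≤
      ∫⁻ x in S, ENNReal.ofReal |f x - b| ∂μ + ENNReal.ofReal |b - a| * μ S := by
  calc _ ≤ ∫⁻ x in S, (ENNReal.ofReal |f x - b| + ENNReal.ofReal |b - a|) ∂μ := by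
        apply lintegral_mono
        intro x
        simp only
        rw [← ENNReal.ofReal_add (abs_nonneg _) (abs_nonneg _)]
        exact ENNReal.ofReal_le_ofReal (abs_sub_le _ _ _)
    _ = _ := by
        rw [lintegral_add_right _ measurable_const, setLIntegral_const]

lemma jn_subset_of {P Q : CubeOf μ} {a b : ℝ} (h : P.c ∈ Q.dil a)
    (hl : a * Q.ℓ + P.ℓ ≤ b * Q.ℓ) : P.set ⊆ Q.dil b := by
  intro y hy i
  have h1 := hy i
  have h2 := h i
  have := abs_sub_le (y i) (P.c i) (Q.c i)
  linarith

lemma jn_dil_subset_of {P Q : CubeOf μ} {a b r : ℝ} (h : P.c ∈ Q.dil a)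
    (hl : a * Q.ℓ + r * P.ℓ ≤ b * Q.ℓ) : P.dil r ⊆ Q.dil b := by
  intro y hy i
  have h1 := hy i
  have h2 := h i
  have := abs_sub_le (y i) (P.c i) (Q.c i)
  linarith

lemma jn_set_subset_of {P Q : CubeOf μ} {a : ℝ} (h : P.c ∈ Q.dil a)
    (hl : a * Q.ℓ + P.ℓ ≤ Q.ℓ) : P.set ⊆ Q.set := by
  intro y hy i
  have h1 := hy i
  have h2 := h i
  have := abs_sub_le (y i) (P.c i) (Q.c i)
  linarith

/-- Comparable cubes have comparable numbers. -/
lemma jn_comp (hd : 1 ≤ d) {n : ℕ} {C₀ c : ℝ} (hC₀ : 0 < C₀) (hc : 0 < c)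
    (hg : GrowthBound μ n C₀) {fQ : CubeOf μ → ℝ}
    (H2 : ∀ Q R : CubeOf μ, Q.set ⊆ R.set → |fQ Q - fQ R| ≤ c * Kcoef n Q R)
    {P R : CubeOf μ} {m : ℕ} (hm : 1 ≤ m) (h : R.ℓ ≤ 2 ^ m * P.ℓ) (hs : P.set ⊆ R.set) :
    |fQ P - fQ R| ≤ c * (1 + m * (C₀ * d ^ n)) :=
  (H2 P R hs).trans (mul_le_mul_of_nonneg_left (jn_K_le hd hC₀ hg hm h) hc.le)

lemma jn_cover (hd : 1 ≤ d) {n : ℕ} {C₀ βd ρ c : ℝ} (hC₀ : 0 < C₀) (hc : 0 < c)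
    (hg : GrowthBound μ n C₀) (hsd : SmallDoublingAE μ βd) {f : Euc d → ℝ} {fQ : CubeOf μ → ℝ}
    (H1 : ∀ Q : CubeOf μ, ∫⁻ x in Q.set, ENNReal.ofReal |f x - fQ Q| ∂μ ≤
          ENNReal.ofReal c * μ (Q.dil 2))
    (H2 : ∀ Q R : CubeOf μ, Q.set ⊆ R.set → |fQ Q - fQ R| ≤ c * Kcoef n Q R)
    (hρ2 : ρ ≤ 2) (s : ℕ) (hs : 3 * ((1:ℝ)/2) ^ s ≤ ρ - 1) (Q : CubeOf μ) :
    ∫⁻ x in Q.dil (1 + (1/2) ^ s), ENNReal.ofReal |f x - fQ Q| ∂μ ≤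
      ENNReal.ofReal (c * ((Fintype.piFinset (fun _ : Fin d =>
        Finset.Icc (-2 ^ (s+1) : ℤ) (2 ^ (s+1)))).card * (3 + (s + 4) * (C₀ * d ^ n)))) *
        μ (Q.dil ρ) := by
  set δ : ℝ := (1/2) ^ s with hδ
  have hδ0 : 0 < δ := by positivity
  have hδ2 : 2 ^ s * δ = 1 := by rw [hδ, ← mul_pow]; norm_num
  have hl := Q.ℓ_pos
  set I := (Fintype.piFinset (fun _ : Fin d => Finset.Icc (-2 ^ (s+1) : ℤ) (2 ^ (s+1)))) with hI
  set A := Q.dil (1 + δ) with hA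
  set w : ℝ := δ * Q.ℓ / 2 with hw
  have hw0 : 0 < w := by positivity
  let cell : (Fin d → ℤ) → Set (Euc d) := fun k => {y | y ∈ A ∧ ∀ i, ⌊(y i - Q.c i) / w⌋ = k i}
  have hcov : A ⊆ ⋃ k ∈ I, cell k := by
    intro y hy
    simp only [mem_iUnion]
    refine ⟨fun i => ⌊(y i - Q.c i) / w⌋, ?_, hy, fun i => rfl⟩
    rw [hI, Fintype.mem_piFinset]
    intro i
    have h1 : |y i - Q.c i| ≤ (1 + δ) * Q.ℓ / 2 := hy i
    have hX : (1 + δ) * Q.ℓ / 2 ≤ 2 ^ (s+1) * w := by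
      have : (2:ℝ) ^ (s+1) * w = Q.ℓ * (2 ^ s * δ) := by rw [hw]; ring
      rw [this, hδ2]; nlinarith
    rw [abs_le] at h1
    rw [Finset.mem_Icc]
    constructor
    · rw [Int.le_floor, le_div_iff₀ hw0]; push_cast; linarith
    · have : ((⌊(y i - Q.c i) / w⌋ : ℤ) : ℝ) ≤ ((2 ^ (s+1) : ℤ) : ℝ) := by
        refine (Int.floor_le _).trans ?_
        rw [div_le_iff₀ hw0]; push_cast; linarith
      exact_mod_cast this
  have hsupp : ∀ᵐ x ∂μ, x ∈ measSupp μ := by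
    filter_upwards [hsd] with x hx
    obtain ⟨P, hP, -⟩ := hx 1 one_pos
    rw [← hP]; exact P.c_mem
  have hpos : 0 ≤ C₀ * (d:ℝ) ^ n := by positivity
  have hcell : ∀ k, ∫⁻ x in cell k, ENNReal.ofReal |f x - fQ Q| ∂μ ≤
      ENNReal.ofReal (c * (3 + (s + 4) * (C₀ * d ^ n))) * μ (Q.dil ρ) := by
    intro k
    by_cases hk : ∃ y ∈ cell k, y ∈ measSupp μ
    · obtain ⟨y, hy, hys⟩ := hk
      let P : CubeOf μ := ⟨y, δ * Q.ℓ, by positivity, hys⟩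
      have hPl : P.ℓ = δ * Q.ℓ := rfl
      have hPc : P.c ∈ Q.dil (1 + δ) := hy.1
      have h1 : cell k ⊆ P.set := by
        intro z hz i
        have e : ⌊(z i - Q.c i) / w⌋ = ⌊(y i - Q.c i) / w⌋ := (hz.2 i).trans (hy.2 i).symm
        have := Int.abs_sub_lt_one_of_floor_eq_floor e
        rw [← sub_div, abs_div, abs_of_pos hw0, div_lt_one hw0] at this
        change |z i - y i| ≤ δ * Q.ℓ / 2
        rw [show z i - y i = z i - Q.c i - (y i - Q.c i) by ring]
        exact this.le
      have h2 : P.dil 2 ⊆ Q.dil ρ := jn_dil_subset_of hPc (by rw [hPl]; nlinarith)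
      have h2' : P.set ⊆ Q.dil ρ := jn_subset_of hPc (by rw [hPl]; nlinarith)
      let R : CubeOf μ := Q.pow2 2
      have hRl : R.ℓ = 2 ^ 2 * Q.ℓ := rfl
      have hPR : P.set ⊆ R.set := by
        intro z hz i
        have := h2' hz i
        change |z i - Q.c i| ≤ 2 ^ 2 * Q.ℓ / 2
        nlinarith
      have hQR : Q.set ⊆ R.set := by
        intro z hz i
        have := hz i
        change |z i - Q.c i| ≤ 2 ^ 2 * Q.ℓ / 2
        nlinarith
      have e1 := jn_comp hd hC₀ hc hg H2 (m := s + 2) (by omega)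
        (by rw [hRl, hPl, show (2:ℝ) ^ (s+2) * (δ * Q.ℓ) = 2 ^ 2 * Q.ℓ * (2 ^ s * δ) by ring,
          hδ2]; linarith) hPR
      have e2 := jn_comp hd hC₀ hc hg H2 (m := 2) (by omega) hRl.le hQR
      have e3 : |fQ P - fQ Q| ≤ c * (2 + (s + 4) * (C₀ * d ^ n)) := by
        have := abs_sub_le (fQ P) (fQ R) (fQ Q)
        rw [abs_sub_comm (fQ R)] at this
        push_cast at e1 e2
        linarith
      calc _ ≤ ∫⁻ x in P.set, ENNReal.ofReal |f x - fQ Q| ∂μ := lintegral_mono_set h1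
        _ ≤ ∫⁻ x in P.set, ENNReal.ofReal |f x - fQ P| ∂μ + ENNReal.ofReal |fQ P - fQ Q| * μ P.set :=
          jn_tri _ _ _ _
        _ ≤ ENNReal.ofReal c * μ (Q.dil ρ) +
            ENNReal.ofReal (c * (2 + (s + 4) * (C₀ * d ^ n))) * μ (Q.dil ρ) := by
          gcongr
          exact (H1 P).trans (by gcongr)
        _ = _ := by
          rw [← add_mul, ← ENNReal.ofReal_add hc.le (by positivity)]
          congr 2; ring
    · have : μ (cell k) = 0 := by
        refine measure_mono_null ?_ (ae_iff.1 hsupp)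
        intro y hy hys
        exact hk ⟨y, hy, hys⟩
      rw [setLIntegral_measure_zero _ _ this]
      exact zero_le
  calc _ ≤ ∫⁻ x in ⋃ k ∈ I, cell k, ENNReal.ofReal |f x - fQ Q| ∂μ := lintegral_mono_set hcov
    _ ≤ ∑ k ∈ I, ∫⁻ x in cell k, ENNReal.ofReal |f x - fQ Q| ∂μ := by
      rw [show (⋃ k ∈ I, cell k) = ⋃ k : I, cell k from biUnion_eq_iUnion (I : Set (Fin d → ℤ)) (fun k _ => cell k)]
      refine (lintegral_iUnion_le _ _).trans ?_
      rw [tsum_fintype]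
      exact (Finset.sum_coe_sort I (fun k => ∫⁻ x in cell k, ENNReal.ofReal |f x - fQ Q| ∂μ)).le
    _ ≤ ∑ k ∈ I, ENNReal.ofReal (c * (3 + (s + 4) * (C₀ * d ^ n))) * μ (Q.dil ρ) :=
      Finset.sum_le_sum fun k _ => hcell k
    _ = _ := by
      rw [Finset.sum_const, nsmul_eq_mul, ← mul_assoc, ← ENNReal.ofReal_natCast,
        ← ENNReal.ofReal_mul (by positivity)]
      congr 2; ring


lemma jn_set_eq (P : CubeOf μ) :
    P.set = (WithLp.ofLp : Euc d → (Fin d → ℝ)) ⁻¹' closedBall (WithLp.ofLp P.c) (P.ℓ/2) := by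
  ext y
  have hl := P.ℓ_pos
  rw [mem_preimage, mem_closedBall, dist_pi_le_iff (by positivity)]
  exact Iff.rfl

lemma jn_set_meas (P : CubeOf μ) : MeasurableSet P.set := by
  rw [jn_set_eq]
  exact (PiLp.continuous_ofLp 2 _).measurable isClosed_closedBall.measurableSet

lemma jn_besicovitch (d : ℕ) : ∃ N : ℕ, ∀ (μ : MeasureTheory.Measure (Euc d)) (β : Type)
    (P : β → CubeOf μ) (L : ℝ), (∀ b, (P b).ℓ ≤ L) →
    ∃ s : Fin N → Set β, (∀ i, (s i).Countable) ∧
      (∀ i, (s i).PairwiseDisjoint (fun j => (P j).set)) ∧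
      ∀ b, ∃ i, ∃ j ∈ s i, (P b).c ∈ (P j).set := by
  obtain ⟨N, τ, hτ, hN⟩ := HasBesicovitchCovering.no_satelliteConfig (α := Fin d → ℝ)
  refine ⟨N, fun μ β P L hL => ?_⟩
  let q : Besicovitch.BallPackage β (Fin d → ℝ) :=
    { c := fun b => WithLp.ofLp (P b).c
      r := fun b => (P b).ℓ / 2
      rpos := fun b => half_pos (P b).ℓ_pos
      r_bound := L / 2
      r_le := fun b => by have := hL b; linarith }
  obtain ⟨s, hs1, hs2⟩ := Besicovitch.exist_disjoint_covering_families hτ hN q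
  refine ⟨s, fun i => ?_, fun i => ?_, fun b => ?_⟩
  · refine (hs1 i).countable_of_nonempty_interior fun j _ => ?_
    exact (nonempty_ball.2 (q.rpos j)).mono ball_subset_interior_closedBall
  · intro j hj k hk hjk
    have := hs1 i hj hk hjk
    simp only [Function.onFun]
    rw [jn_set_eq, jn_set_eq]
    exact this.preimage _
  · have := hs2 (mem_range_self b)
    simp only [mem_iUnion] at this
    obtain ⟨i, j, hj, h⟩ := this
    refine ⟨i, j, hj, ?_⟩
    rw [jn_set_eq]
    exact ball_subset_closedBall h

lemma jn_locFin {n : ℕ} {C₀ : ℝ} (hg : GrowthBound μ n C₀) : IsLocallyFiniteMeasure μ :=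
  ⟨fun x => ⟨ball x 1, ball_mem_nhds _ one_pos, (hg x 1 one_pos).trans_lt ENNReal.ofReal_lt_top⟩⟩

lemma jn_lebesgue [IsLocallyFiniteMeasure μ] {g : Euc d → ℝ≥0∞} (hg : AEMeasurable g μ)
    (hgi : ∫⁻ x, g x ∂μ ≠ ⊤) :
    ∀ᵐ x ∂μ, ∀ b : ℝ≥0∞, b < g x → ∃ ε > 0, ∀ P : CubeOf μ, P.c = x → P.ℓ < ε →
      b < (∫⁻ y in P.set, g y ∂μ) / μ P.set := by
  let e : Euc d ≃ᵐ (Fin d → ℝ) := (PiLp.homeomorph 2 (fun _ : Fin d => ℝ)).toMeasurableEquiv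
  have he : ∀ x, e x = WithLp.ofLp x := fun x => rfl
  let ν := μ.map e
  have hν : IsLocallyFiniteMeasure ν := by
    refine ⟨fun x => ?_⟩
    obtain ⟨s, hs, hs'⟩ := μ.exists_isOpen_measure_lt_top (e.symm x)
    refine ⟨e '' s, ?_, ?_⟩
    · refine ((PiLp.homeomorph 2 (fun _ : Fin d => ℝ)).isOpenMap s hs'.1).mem_nhds ?_
      exact ⟨e.symm x, hs, e.apply_symm_apply x⟩
    · rw [e.map_apply, preimage_image_eq _ e.injective]
      exact hs'.2
  have hgm : AEMeasurable (g ∘ e.symm) ν := by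
    rw [e.measurableEmbedding.aemeasurable_map_iff]
    simpa [Function.comp_def] using hg
  have hgi' : ∫⁻ y, (g ∘ e.symm) y ∂ν ≠ ⊤ := by
    rw [lintegral_map_equiv]
    simpa using hgi
  have key := VitaliFamily.ae_tendsto_lintegral_div (Besicovitch.vitaliFamily ν) hgm hgi'
  filter_upwards [ae_of_ae_map e.measurable.aemeasurable key] with x hx b hb
  have h1 := hx.comp (Besicovitch.tendsto_filterAt ν (e x))
  simp only [Function.comp_apply, e.symm_apply_apply] at h1
  have h2 := h1.eventually (lt_mem_nhds hb)
  rw [eventually_nhdsWithin_iff, Metric.eventually_nhds_iff] at h2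
  obtain ⟨ε, hε, h3⟩ := h2
  refine ⟨ε, hε, fun P hP hPl => ?_⟩
  have hl := P.ℓ_pos
  have h4 := h3 (y := P.ℓ/2) (by rw [Real.dist_eq, sub_zero, abs_of_pos (by positivity)]; linarith)
    (by rw [mem_Ioi]; positivity)
  have e1 : e ⁻¹' closedBall (e x) (P.ℓ/2) = P.set := by rw [jn_set_eq, hP]; rfl
  simp only [Function.comp_apply] at h4
  rw [e.restrict_map, lintegral_map_equiv, e.map_apply, e1] at h4
  simpa using h4

lemma jn_fmeas {f : Euc d → ℝ} (hf : LocallyIntegrable f μ) (a : ℝ) :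
    AEMeasurable (fun x => ENNReal.ofReal |f x - a|) μ := by
  have h1 := hf.aestronglyMeasurable.aemeasurable
  have h2 : AEMeasurable (fun x => |f x - a|) μ := by
    simpa [Real.norm_eq_abs] using (h1.sub_const a).norm
  exact h2.ennreal_ofReal

lemma jn_small (hd : 1 ≤ d) {n : ℕ} {C₀ βd c B δ : ℝ}
    (hδ : 0 < δ) (hB : 0 ≤ B)
    (hg : GrowthBound μ n C₀) (hsd : SmallDoublingAE μ βd) {f : Euc d → ℝ} {fQ : CubeOf μ → ℝ}
    (hf : LocallyIntegrable f μ)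
    (H1 : ∀ Q : CubeOf μ, ∫⁻ x in Q.set, ENNReal.ofReal |f x - fQ Q| ∂μ ≤
          ENNReal.ofReal c * μ (Q.dil 2)) (Q : CubeOf μ) :
    ∀ᵐ x ∂μ, x ∈ Q.set → B < |f x - fQ Q| → ∃ P : CubeOf μ, P.c = x ∧ P.ℓ ≤ δ * Q.ℓ ∧
      IsDoubling μ 2 βd P ∧
      ENNReal.ofReal B * μ P.set < ∫⁻ y in P.set, ENNReal.ofReal |f y - fQ Q| ∂μ := by
  have hlf := jn_locFin hg
  have hl := Q.ℓ_pos
  let R := Q.pow2 1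
  have hRl : R.ℓ = 2 ^ 1 * Q.ℓ := rfl
  have hfm := jn_fmeas hf (fQ Q)
  have hfin : ∫⁻ x, R.set.indicator (fun x => ENNReal.ofReal |f x - fQ Q|) x ∂μ ≠ ⊤ := by
    rw [lintegral_indicator (jn_set_meas R)]
    refine ((jn_tri f R.set (fQ Q) (fQ R)).trans_lt ?_).ne
    refine ENNReal.add_lt_top.2 ⟨(H1 R).trans_lt ?_, ?_⟩
    · rw [jn_pow2_dil]
      exact ENNReal.mul_lt_top ENNReal.ofReal_lt_top (jn_set_ne_top hd hg _).lt_top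
    · exact ENNReal.mul_lt_top ENNReal.ofReal_lt_top (jn_set_ne_top hd hg _).lt_top
  filter_upwards [jn_lebesgue (hfm.indicator (jn_set_meas R)) hfin, hsd] with x hx hx2 hxQ hxB
  have hxR : x ∈ R.set := by
    intro i
    have := hxQ i
    change |x i - Q.c i| ≤ 2 ^ 1 * Q.ℓ / 2
    linarith
  obtain ⟨ε, hε, h⟩ := hx (ENNReal.ofReal B) (by
    rw [indicator_of_mem hxR]
    rwa [ENNReal.ofReal_lt_ofReal_iff_of_nonneg hB])
  obtain ⟨P, hPc, hPl, hPd⟩ := hx2 (min ε (δ * Q.ℓ)) (lt_min hε (by positivity))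
  rw [lt_min_iff] at hPl
  refine ⟨P, hPc, hPl.2.le, hPd, ?_⟩
  have h1 := h P hPc hPl.1
  rw [ENNReal.lt_div_iff_mul_lt (Or.inl (jn_set_pos P).ne') (Or.inl (jn_set_ne_top hd hg P))] at h1
  refine h1.trans_le (lintegral_mono fun y => ?_)
  exact indicator_le_self _ _ y

lemma jn_max (hd : 1 ≤ d) {n : ℕ} {C₀ βd c B : ℝ} (hC₀ : 0 < C₀) (hc : 0 < c) (hB : 0 < B)
    (hβ : (2 : ℝ) ^ n < βd)
    (hg : GrowthBound μ n C₀) {f : Euc d → ℝ} {fQ : CubeOf μ → ℝ}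
    (hfm : ∀ a : ℝ, AEMeasurable (fun x => ENNReal.ofReal |f x - a|) μ)
    (H1 : ∀ Q : CubeOf μ, ∫⁻ x in Q.set, ENNReal.ofReal |f x - fQ Q| ∂μ ≤
          ENNReal.ofReal c * μ (Q.dil 2))
    (H2 : ∀ Q R : CubeOf μ, Q.set ⊆ R.set → |fQ Q - fQ R| ≤ c * Kcoef n Q R)
    (s : ℕ) (Q : CubeOf μ) (x : Euc d) (hx : x ∈ Q.set)
    (hP : ∃ P : CubeOf μ, P.c = x ∧ P.ℓ ≤ (1/2)^s * Q.ℓ ∧ IsDoubling μ 2 βd P ∧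
      ENNReal.ofReal (B * c) * μ P.set < ∫⁻ y in P.set, ENNReal.ofReal |f y - fQ Q| ∂μ) :
    ∃ P : CubeOf μ, P.c = x ∧ P.ℓ ≤ (1/2)^s * Q.ℓ ∧ IsDoubling μ 2 βd P ∧
      ENNReal.ofReal (B * c) * μ P.set < ∫⁻ y in P.set, ENNReal.ofReal |f y - fQ Q| ∂μ ∧
      |fQ P - fQ Q| ≤ c * (B + βd + 2 + C₀ * d ^ n / (1 - 2 ^ n / βd) + (s + 5) * (C₀ * d ^ n)) := by
  have hβ0 : 0 < βd := lt_trans (by positivity) hβ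
  have hθ : (2:ℝ) ^ n / βd < 1 := (div_lt_one hβ0).2 hβ
  have h1θ : 0 < 1 - (2:ℝ) ^ n / βd := by linarith
  set δ : ℝ := (1/2) ^ s with hδ
  have hδ0 : 0 < δ := by positivity
  have hδ2 : 2 ^ s * δ = 1 := by rw [hδ, ← mul_pow]; norm_num
  have hδ1 : δ ≤ 1 := pow_le_one₀ (by norm_num) (by norm_num)
  have hl := Q.ℓ_pos
  set C₁ := C₀ * (d:ℝ) ^ n with hC₁
  have hC₁0 : 0 ≤ C₁ := by positivity
  set T := C₁ / (1 - 2 ^ n / βd) with hT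
  have hT0 : 0 ≤ T := by positivity
  let good : CubeOf μ → Prop := fun P => P.c = x ∧ P.ℓ ≤ δ * Q.ℓ ∧ IsDoubling μ 2 βd P ∧
      ENNReal.ofReal (B * c) * μ P.set < ∫⁻ y in P.set, ENNReal.ofReal |f y - fQ Q| ∂μ
  let S : Set ℝ := {l | ∃ P, good P ∧ P.ℓ = l}
  obtain ⟨P₀, hP₀⟩ := hP
  have hSne : S.Nonempty := ⟨_, P₀, hP₀, rfl⟩
  have hSb : BddAbove S := ⟨δ * Q.ℓ, by rintro _ ⟨P, hP, rfl⟩; exact hP.2.1⟩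
  have hsup : 0 < sSup S := P₀.ℓ_pos.trans_le (le_csSup hSb ⟨P₀, hP₀, rfl⟩)
  obtain ⟨_, ⟨P, hPg, rfl⟩, hPs⟩ := exists_lt_of_lt_csSup hSne (half_lt_self hsup)
  have hPl := P.ℓ_pos
  have hmax : ∀ R, good R → R.ℓ < 2 * P.ℓ := fun R hR => by
    have := le_csSup hSb ⟨R, hR, rfl⟩
    linarith
  refine ⟨P, hPg.1, hPg.2.1, hPg.2.2.1, hPg.2.2.2, ?_⟩
  have hsub : ∀ j, P.set ⊆ (P.pow2 j).set := by
    intro j y hy i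
    refine (hy i).trans ?_
    change P.ℓ / 2 ≤ 2 ^ j * P.ℓ / 2
    have : (1:ℝ) ≤ 2 ^ j := one_le_pow₀ (by norm_num)
    nlinarith
  have hK : ∀ j m, (∀ i, 1 ≤ i → i ≤ j → ¬ IsDoubling μ 2 βd (P.pow2 i)) →
      |fQ P - fQ (P.pow2 (j+1+m))| ≤ c * (1 + T + m * C₁) := by
    intro j m hj
    refine (H2 _ _ (hsub _)).trans (mul_le_mul_of_nonneg_left ?_ hc.le)
    refine (jn_K_le_sum (m := j+1+m) (by omega) le_rfl).trans ?_
    have h1 := jn_sum_nondoubling' hd hC₀ hg hβ P j hj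
    have h2 : ∑ k ∈ Finset.Icc 1 (j+1+m), jnA n P k ≤
        ∑ k ∈ Finset.Icc 1 (j+1), jnA n P k + m * C₁ := by
      clear h1 
      induction m with
      | zero => simp
      | succ m ih =>
        rw [← add_assoc, Finset.sum_Icc_succ_top (by omega)]
        have := jnA_le hd hC₀ hg P (j+1+m+1)
        push_cast
        linarith
    linarith
  by_cases hex : ∃ j, 1 ≤ j ∧ 2 ^ j * P.ℓ ≤ δ * Q.ℓ ∧ IsDoubling μ 2 βd (P.pow2 j)
  · obtain ⟨j, ⟨hj1, hjl, hjd⟩, hmin⟩ : ∃ j, (1 ≤ j ∧ 2 ^ j * P.ℓ ≤ δ * Q.ℓ ∧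
        IsDoubling μ 2 βd (P.pow2 j)) ∧ ∀ i, 1 ≤ i → i < j → ¬ IsDoubling μ 2 βd (P.pow2 i) := by
      refine ⟨Nat.find hex, Nat.find_spec hex, fun i hi hij hdi => Nat.find_min hex hij ⟨hi, ?_, hdi⟩⟩
      refine le_trans ?_ (Nat.find_spec hex).2.1
      have : (2:ℝ) ^ i ≤ 2 ^ (Nat.find hex) := pow_le_pow_right₀ (by norm_num) hij.le
      nlinarith
    obtain ⟨j, rfl⟩ : ∃ k, j = k + 1 := ⟨j - 1, by omega⟩
    have e1 := hK j 0 (fun i hi hij => hmin i hi (by omega))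
    simp only [add_zero, Nat.cast_zero, zero_mul] at e1
    set R := P.pow2 (j+1) with hR
    have hRl : R.ℓ = 2 ^ (j+1) * P.ℓ := rfl
    have hRng : ¬ good R := fun h => by
      have h3 := hmax R h
      rw [hRl] at h3
      have : (2:ℝ) ^ 1 ≤ 2 ^ (j+1) := pow_le_pow_right₀ (by norm_num) hj1
      nlinarith
    have hRi : ∫⁻ y in R.set, ENNReal.ofReal |f y - fQ Q| ∂μ ≤ ENNReal.ofReal (B * c) * μ R.set := by
      by_contra hcon
      exact hRng ⟨hPg.1, hjl, hjd, not_le.1 hcon⟩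
    have e2 : |fQ R - fQ Q| ≤ c * (B + βd) := by
      have h1 : ENNReal.ofReal |fQ R - fQ Q| * μ R.set ≤ ENNReal.ofReal (c * (B + βd)) * μ R.set := by
        calc _ = ∫⁻ y in R.set, ENNReal.ofReal |fQ R - fQ Q| ∂μ := by rw [setLIntegral_const]
          _ ≤ ∫⁻ y in R.set, ENNReal.ofReal |f y - fQ R| ∂μ +
              ∫⁻ y in R.set, ENNReal.ofReal |f y - fQ Q| ∂μ := by
            rw [← lintegral_add_left' (hfm _).restrict]
            refine lintegral_mono fun y => ?_
            rw [← ENNReal.ofReal_add (abs_nonneg _) (abs_nonneg _)]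
            refine ENNReal.ofReal_le_ofReal ?_
            rw [abs_sub_comm (f y) (fQ R)]
            exact abs_sub_le _ _ _
          _ ≤ ENNReal.ofReal c * (ENNReal.ofReal βd * μ R.set) + ENNReal.ofReal (B * c) * μ R.set := by
            gcongr
            exact (H1 R).trans (mul_le_mul_right hjd _)
          _ = _ := by
            rw [← mul_assoc, ← add_mul, ← ENNReal.ofReal_mul hc.le,
              ← ENNReal.ofReal_add (by positivity) (by positivity)]
            congr 2; ring
      rw [ENNReal.mul_le_mul_iff_left (jn_set_pos R).ne' (jn_set_ne_top hd hg R)] at h1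
      exact (ENNReal.ofReal_le_ofReal_iff (by positivity)).1 h1
    have := abs_sub_le (fQ P) (fQ R) (fQ Q)
    have h9 : 0 ≤ c * (1 + (s + 5) * C₁) := by positivity
    linarith
  · push Not at hex
    obtain ⟨j, hj1, hj2⟩ : ∃ j : ℕ, 2 ^ j * P.ℓ ≤ δ * Q.ℓ ∧ δ * Q.ℓ < 2 ^ (j+1) * P.ℓ := by
      obtain ⟨k, hk⟩ := exists_nat_pow_near (x := δ * Q.ℓ / P.ℓ) (y := 2)
        (by rw [one_le_div hPl]; exact hPg.2.1) (by norm_num)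
      rw [le_div_iff₀ hPl, div_lt_iff₀ hPl] at hk
      exact ⟨k, hk⟩
    have e1 := hK j (s+2) (fun i hi hij => hex i hi (by
      refine le_trans ?_ hj1
      have : (2:ℝ) ^ i ≤ 2 ^ j := pow_le_pow_right₀ (by norm_num) hij
      nlinarith))
    set R := P.pow2 (j+1+(s+2)) with hR
    have hRl : R.ℓ = 8 * 2 ^ s * (2 ^ j * P.ℓ) := by
      change 2 ^ (j+1+(s+2)) * P.ℓ = _
      ring
    have hRl1 : R.ℓ ≤ 8 * Q.ℓ := by
      rw [hRl]
      calc _ ≤ 8 * 2 ^ s * (δ * Q.ℓ) := by gcongr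
        _ = 8 * Q.ℓ * (2 ^ s * δ) := by ring
        _ = _ := by rw [hδ2, mul_one]
    have hRl2 : 4 * Q.ℓ ≤ R.ℓ := by
      rw [hRl]
      calc 4 * Q.ℓ = 4 * Q.ℓ * (2 ^ s * δ) := by rw [hδ2, mul_one]
        _ = 4 * 2 ^ s * (δ * Q.ℓ) := by ring
        _ ≤ 4 * 2 ^ s * (2 ^ (j+1) * P.ℓ) := by gcongr
        _ = _ := by ring
    have hQR : Q.set ⊆ R.set := by
      intro y hy i
      have h1 := hy i
      have h2 := hx i
      have hRc : R.c = x := hPg.1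
      rw [hRc]
      have := abs_sub_le (y i) (Q.c i) (x i)
      rw [abs_sub_comm (Q.c i)] at this
      linarith
    have e2 := jn_comp hd hC₀ hc hg H2 (m := 3) (by omega) (by linarith) hQR
    have := abs_sub_le (fQ P) (fQ R) (fQ Q)
    rw [abs_sub_comm (fQ R)] at this
    push_cast at e1 e2
    have h9 : 0 ≤ c * (B + βd) := by positivity
    linarith


lemma jn_iter (hd : 1 ≤ d) {n N : ℕ} {C₀ βd ρ c B M : ℝ} (hC₀ : 0 < C₀) (hc : 0 < c) (hB : 0 < B)
    (hM : 0 ≤ M) (hβ : (2 : ℝ) ^ n < βd)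
    (hN : ∀ (β : Type)
    (P : β → CubeOf μ) (L : ℝ), (∀ b, (P b).ℓ ≤ L) →
    ∃ s : Fin N → Set β, (∀ i, (s i).Countable) ∧
      (∀ i, (s i).PairwiseDisjoint (fun j => (P j).set)) ∧
      ∀ b, ∃ i, ∃ j ∈ s i, (P b).c ∈ (P j).set)
    (hg : GrowthBound μ n C₀) (hsd : SmallDoublingAE μ βd) {f : Euc d → ℝ} {fQ : CubeOf μ → ℝ}
    (hf : LocallyIntegrable f μ)
    (H1 : ∀ Q : CubeOf μ, ∫⁻ x in Q.set, ENNReal.ofReal |f x - fQ Q| ∂μ ≤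
          ENNReal.ofReal c * μ (Q.dil 2))
    (H2 : ∀ Q R : CubeOf μ, Q.set ⊆ R.set → |fQ Q - fQ R| ≤ c * Kcoef n Q R)
    (hρ1 : 1 < ρ) (hρ2 : ρ ≤ 2) (s : ℕ)
    (H3 : ∀ Q : CubeOf μ, ∫⁻ x in Q.dil (1 + (1/2) ^ s), ENNReal.ofReal |f x - fQ Q| ∂μ ≤
      ENNReal.ofReal (c * M) * μ (Q.dil ρ))
    (hBM : 2 * (N * βd * M) ≤ B) (k : ℕ) : ∀ Q : CubeOf μ,
    μ {x | x ∈ Q.set ∧ k * (c * (B + βd + 2 + C₀ * d ^ n / (1 - 2 ^ n / βd) +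
      (s + 5) * (C₀ * d ^ n))) < |f x - fQ Q|} ≤ ENNReal.ofReal ((1/2) ^ k) * μ (Q.dil ρ) := by
  have hβ0 : 0 < βd := lt_trans (by positivity) hβ
  have hθ : (2:ℝ) ^ n / βd < 1 := (div_lt_one hβ0).2 hβ
  have h1θ : 0 < 1 - (2:ℝ) ^ n / βd := by linarith
  set A := (B + βd + 2 + C₀ * d ^ n / (1 - 2 ^ n / βd) + (s + 5) * (C₀ * d ^ n)) with hA
  have hAB : B ≤ A := by
    have : 0 ≤ βd + 2 + C₀ * d ^ n / (1 - 2 ^ n / βd) + (s + 5) * (C₀ * d ^ n) := by positivity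
    linarith
  have hA0 : 0 < A := hB.trans_le hAB
  induction k with
  | zero =>
    intro Q
    simp only [pow_zero, ENNReal.ofReal_one, one_mul]
    refine measure_mono fun x hx i => (hx.1 i).trans ?_
    have := Q.ℓ_pos
    nlinarith
  | succ k ih =>
    intro Q
    have hl := Q.ℓ_pos
    set E : Set (Euc d) := {x | x ∈ Q.set ∧ ((k+1:ℕ):ℝ) * (c * A) < |f x - fQ Q|} with hE
    have hae := jn_small hd (B := B * c) (δ := (1/2)^s) (by positivity) (by positivity) hg hsd hf H1 Q
    let Z : Set (Euc d) := {x | ¬ (x ∈ Q.set → B * c < |f x - fQ Q| → ∃ P : CubeOf μ, P.c = x ∧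
      P.ℓ ≤ (1/2)^s * Q.ℓ ∧ IsDoubling μ 2 βd P ∧
      ENNReal.ofReal (B * c) * μ P.set < ∫⁻ y in P.set, ENNReal.ofReal |f y - fQ Q| ∂μ)}
    have hZ : μ Z = 0 := ae_iff.1 hae
    have hsel : ∀ x : ↥(E \ Z), ∃ P : CubeOf μ, P.c = x ∧ P.ℓ ≤ (1/2)^s * Q.ℓ ∧ IsDoubling μ 2 βd P ∧
      ENNReal.ofReal (B * c) * μ P.set < ∫⁻ y in P.set, ENNReal.ofReal |f y - fQ Q| ∂μ ∧
      |fQ P - fQ Q| ≤ c * A := by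
      rintro ⟨x, hxE, hxZ⟩
      have hz := not_not.1 hxZ
      refine jn_max hd hC₀ hc hB hβ hg (jn_fmeas hf) H1 H2 s Q x hxE.1 (hz hxE.1 ?_)
      refine lt_of_le_of_lt ?_ hxE.2
      have h1 : (0:ℝ) ≤ k := Nat.cast_nonneg k
      have h2 : 0 < c * A := by positivity
      have h3 : B * c ≤ c * A := by nlinarith
      push_cast
      nlinarith
    choose P hPc hPl hPd hPi hPf using hsel
    obtain ⟨S, hS1, hS2, hS3⟩ := hN _ P _ hPl
    have hcov : E ⊆ Z ∪ ⋃ i, ⋃ j ∈ S i,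
        {x | x ∈ (P j).set ∧ k * (c * A) < |f x - fQ (P j)|} := by
      intro x hx
      by_cases hxZ : x ∈ Z
      · exact Or.inl hxZ
      · right
        obtain ⟨i, j, hj, hm⟩ := hS3 ⟨x, hx, hxZ⟩
        rw [hPc] at hm
        simp only [mem_iUnion]
        refine ⟨i, j, hj, hm, ?_⟩
        have h1 := hx.2
        have h2 := hPf j
        have h3 := abs_sub_le (f x) (fQ (P j)) (fQ Q)
        push_cast at h1
        linarith
    have hsum : ∀ i, ∑' j : S i, μ (P j).set ≤ ENNReal.ofReal (M / B) * μ (Q.dil ρ) := by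
      intro i
      have : Countable (S i) := (hS1 i).to_subtype
      have h1 : ENNReal.ofReal (B * c) * ∑' j : S i, μ (P j).set ≤
          ENNReal.ofReal (c * M) * μ (Q.dil ρ) := by
        calc _ = ∑' j : S i, ENNReal.ofReal (B * c) * μ (P j).set := ENNReal.tsum_mul_left.symm
          _ ≤ ∑' j : S i, ∫⁻ y in (P j).set, ENNReal.ofReal |f y - fQ Q| ∂μ :=
            ENNReal.tsum_le_tsum fun j => (hPi j).le
          _ = ∫⁻ y in ⋃ j ∈ S i, (P j).set, ENNReal.ofReal |f y - fQ Q| ∂μ :=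
            (lintegral_biUnion (hS1 i) (fun j _ => jn_set_meas _) (hS2 i) _).symm
          _ ≤ ∫⁻ x in Q.dil (1 + (1/2) ^ s), ENNReal.ofReal |f x - fQ Q| ∂μ := by
            refine lintegral_mono_set (iUnion₂_subset fun j _ => ?_)
            refine jn_subset_of (a := 1) ?_ ?_
            · rw [hPc]
              intro i
              have := j.2.1.1 i
              linarith
            · have := hPl j
              linarith
          _ ≤ _ := H3 Q
      have hBc : 0 < B * c := by positivity
      have e1 : ENNReal.ofReal (c * M) = ENNReal.ofReal (B * c) * ENNReal.ofReal (M / B) := by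
        rw [← ENNReal.ofReal_mul hBc.le]
        congr 1
        field_simp
      rw [e1, mul_assoc] at h1
      exact (ENNReal.mul_le_mul_iff_right (ENNReal.ofReal_pos.2 hBc).ne' ENNReal.ofReal_ne_top).1 h1
    calc μ E ≤ μ Z + μ (⋃ i, ⋃ j ∈ S i, {x | x ∈ (P j).set ∧ k * (c * A) < |f x - fQ (P j)|}) :=
          (measure_mono hcov).trans (measure_union_le _ _)
      _ = μ (⋃ i, ⋃ j ∈ S i, {x | x ∈ (P j).set ∧ k * (c * A) < |f x - fQ (P j)|}) := by
          rw [hZ, zero_add]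
      _ ≤ ∑ i : Fin N, μ (⋃ j ∈ S i, {x | x ∈ (P j).set ∧ k * (c * A) < |f x - fQ (P j)|}) :=
          measure_iUnion_fintype_le _ _
      _ ≤ ∑ i : Fin N, ENNReal.ofReal ((1/2)^k) * (ENNReal.ofReal βd * (ENNReal.ofReal (M / B) * μ (Q.dil ρ))) := by
          refine Finset.sum_le_sum fun i _ => ?_
          refine (measure_biUnion_le μ (hS1 i) _).trans ?_
          calc _ ≤ ∑' j : S i, ENNReal.ofReal ((1/2)^k) * (ENNReal.ofReal βd * μ (P j).set) := by
                refine ENNReal.tsum_le_tsum fun j => (ih (P j)).trans ?_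
                gcongr
                refine le_trans (measure_mono ?_) (hPd j)
                intro y hy i
                have h1 := hy i
                have := (P j).ℓ_pos
                nlinarith
            _ = ENNReal.ofReal ((1/2)^k) * (ENNReal.ofReal βd * ∑' j : S i, μ (P j).set) := by
                rw [ENNReal.tsum_mul_left, ENNReal.tsum_mul_left]
            _ ≤ _ := by
                gcongr
                exact hsum i
      _ = ENNReal.ofReal ((1/2)^k * (N * βd * M / B)) * μ (Q.dil ρ) := by
          rw [Finset.sum_const, Finset.card_univ, Fintype.card_fin, nsmul_eq_mul,
            ← ENNReal.ofReal_natCast, ← mul_assoc, ← mul_assoc, ← mul_assoc,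
            ← ENNReal.ofReal_mul (by positivity), ← ENNReal.ofReal_mul (by positivity),
            ← ENNReal.ofReal_mul (by positivity)]
          congr 2; ring
      _ ≤ _ := by
          gcongr ?_ * _
          refine ENNReal.ofReal_le_ofReal ?_
          rw [pow_succ]
          refine mul_le_mul_of_nonneg_left ?_ (by positivity)
          rw [div_le_iff₀ hB]
          linarith

end JN

/-- Theorem 3.1 (John–Nirenberg inequality for `RBMO(μ)`). -/
theorem statement5 (d n : ℕ) (hn : 1 ≤ n) (hnd : n ≤ d) (C₀ βd ρ CC : ℝ)
    (hC₀ : 0 < C₀) (hβ : (2 : ℝ) ^ n < βd) (hρ : 1 < ρ) :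
    ∃ C₅ C₆ : ℝ, 0 < C₅ ∧ 0 < C₆ ∧
      ∀ μ : MeasureTheory.Measure (Euc d), GrowthBound μ n C₀ → SmallDoublingAE μ βd →
      ∀ (f : Euc d → ℝ) (t : ℝ), MeasureTheory.LocallyIntegrable f μ → 0 ≤ t →
        rbmoNorm μ n βd f = ENNReal.ofReal t →
      ∀ fQ : CubeOf μ → ℝ,
        (∀ Q : CubeOf μ, ∫⁻ x in Q.set, ENNReal.ofReal |f x - fQ Q| ∂μ ≤
          ENNReal.ofReal (CC * t) * μ (Q.dil 2)) →
        (∀ Q R : CubeOf μ, Q.set ⊆ R.set → |fQ Q - fQ R| ≤ CC * Kcoef n Q R * t) →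
      ∀ (Q : CubeOf μ) (lam : ℝ), 0 < lam →
        μ {x | x ∈ Q.set ∧ lam < |f x - fQ Q|} ≤
          ENNReal.ofReal (C₅ * Real.exp (-(C₆ * lam) / t)) * μ (Q.dil ρ) := by
  obtain ⟨N, hN⟩ := jn_besicovitch d
  have hd : 1 ≤ d := hn.trans hnd
  have hβ0 : 0 < βd := lt_trans (by positivity) hβ
  have hθ : (2:ℝ) ^ n / βd < 1 := (div_lt_one hβ0).2 hβ
  have h1θ : 0 < 1 - (2:ℝ) ^ n / βd := by linarith
  set ρ' := min ρ 2 with hρ'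
  have hρ1 : 1 < ρ' := lt_min hρ (by norm_num)
  have hρ2 : ρ' ≤ 2 := min_le_right _ _
  obtain ⟨s, hs⟩ := exists_pow_lt_of_lt_one (show 0 < (ρ' - 1) / 3 by linarith)
    (show (1/2:ℝ) < 1 by norm_num)
  set C := max CC 1 with hC
  have hC0 : 0 < C := lt_of_lt_of_le one_pos (le_max_right _ _)
  set M : ℝ := ((Fintype.piFinset (fun _ : Fin d =>
        Finset.Icc (-2 ^ (s+1) : ℤ) (2 ^ (s+1)))).card * (3 + (s + 4) * (C₀ * d ^ n))) with hM
  have hM0 : 0 ≤ M := by positivity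
  set B : ℝ := 2 * (N * βd * M) + 1 with hB
  have hB0 : 0 < B := by positivity
  set A := (B + βd + 2 + C₀ * d ^ n / (1 - 2 ^ n / βd) + (s + 5) * (C₀ * d ^ n)) with hA
  have hA0 : 0 < A := by positivity
  refine ⟨2, Real.log 2 / (C * A), two_pos, div_pos (Real.log_pos one_lt_two) (by positivity), ?_⟩
  intro μ hg hsd f t hf ht _ fQ H1 H2 Q lam hlam
  have hl := Q.ℓ_pos
  rcases ht.eq_or_lt with rfl | ht
  · simp only [div_zero, Real.exp_zero, mul_one]
    calc _ ≤ μ (Q.dil ρ) := by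
          refine measure_mono fun x hx i => (hx.1 i).trans ?_
          nlinarith
      _ = 1 * μ (Q.dil ρ) := (one_mul _).symm
      _ ≤ _ := by gcongr; simp
  have hc : 0 < C * t := by positivity
  have hle : CC * t ≤ C * t := mul_le_mul_of_nonneg_right (le_max_left _ _) ht.le
  have H1' : ∀ Q : CubeOf μ, ∫⁻ x in Q.set, ENNReal.ofReal |f x - fQ Q| ∂μ ≤
      ENNReal.ofReal (C * t) * μ (Q.dil 2) := fun Q => (H1 Q).trans (by gcongr)
  have hK0 : ∀ Q R : CubeOf μ, 0 ≤ Kcoef n Q R := fun Q R => by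
    unfold Kcoef
    have := Finset.sum_nonneg (s := Finset.Icc 1 (NQR Q R)) (fun k _ => jnA_nonneg n Q k)
    unfold jnA at this
    linarith
  have H2' : ∀ Q R : CubeOf μ, Q.set ⊆ R.set → |fQ Q - fQ R| ≤ (C * t) * Kcoef n Q R :=
    fun Q R h => (H2 Q R h).trans (by
      have := mul_le_mul_of_nonneg_right hle (hK0 Q R)
      linarith)
  have key := jn_iter hd hC₀ hc hB0 hM0 hβ (hN μ) hg hsd hf H1' H2' hρ1 hρ2 s
    (jn_cover hd hC₀ hc hg hsd H1' H2' hρ2 s (by linarith)) (by linarith) ⌊lam / (C * t * A)⌋₊ Q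
  set k := ⌊lam / (C * t * A)⌋₊ with hk
  have hcA : 0 < C * t * A := by positivity
  have hk1 : k * (C * t * A) ≤ lam := by
    rw [← le_div_iff₀ hcA]
    exact Nat.floor_le (by positivity)
  have hk2 : lam / (C * t * A) < k + 1 := Nat.lt_floor_add_one _
  calc _ ≤ μ {x | x ∈ Q.set ∧ k * (C * t * A) < |f x - fQ Q|} :=
        measure_mono fun x hx => ⟨hx.1, hk1.trans_lt hx.2⟩
    _ ≤ _ := key
    _ ≤ _ := by
      gcongr ?_ * μ ?_
      · refine ENNReal.ofReal_le_ofReal ?_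
        have e1 : ((1:ℝ)/2) ^ k = 2 * Real.exp (-(Real.log 2 * (k + 1))) := by
          rw [Real.exp_neg, mul_comm (Real.log 2), ← Nat.cast_succ, ← Real.log_pow,
            Real.exp_log (by positivity), pow_succ, one_div, inv_pow]
          field_simp
        rw [e1]
        gcongr
        have e2 : -(Real.log 2 / (C * A) * lam) / t = -(Real.log 2 * (lam / (C * t * A))) := by
          field_simp
        rw [e2]
        have := Real.log_pos one_lt_two
        nlinarith
      · intro x hx i
        refine (hx i).trans ?_
        have : ρ' ≤ ρ := min_le_left _ _
        nlinarith
end
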